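/- arXiv:2209.14939 — 3 statements merged into one kernel-verified Lean document; each statement's English description precedes it below -/
import Mathlib

section
/- For every integer y ≥ 1 and real x large enough (in terms of δ, M, K, ξ) one has E[#(S_z(b) ∩ [1,y])] = σ_z·y exactly, and there exist C > 0 and x₀ (depending only on δ, M, K, ξ) such that for all x ≥ x₀, |E[(#(S_z(b) ∩ [1,y]))²] − (σ_z y)²| ≤ C·(σ_z y)²/ln y, where y and z are as in the setup. -/
open scoped Classical

noncomputable def yy (δ x : ℝ) : ℕ := ⌈x * Real.log x ^ δ⌉₊

noncomputable def zz (δ x : ℝ) : ℝ :=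
  (yy δ x : ℝ) * Real.log (Real.log x) ^ 2 / Real.log x ^ (1/2 : ℝ)

noncomputable def primesUpTo (t : ℝ) : Finset ℕ :=
  (Finset.range (⌊t⌋₊ + 1)).filter fun p => p.Prime ∧ (p : ℝ) ≤ t

noncomputable def PP (t : ℝ) : ℕ := ∏ p ∈ primesUpTo t, p

noncomputable def sigUpTo (t : ℝ) : ℝ := ∏ p ∈ primesUpTo t, (1 - 1 / (p : ℝ))

noncomputable def primesBetween (w t : ℝ) : Finset ℕ :=
  (Finset.range (⌊t⌋₊ + 1)).filter fun p => p.Prime ∧ w < (p : ℝ) ∧ (p : ℝ) ≤ t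

noncomputable def sigBetween (w t : ℝ) : ℝ := ∏ p ∈ primesBetween w t, (1 - 1 / (p : ℝ))

def inS (t : ℝ) (b n : ℤ) : Prop :=
  ∀ p : ℕ, p.Prime → (p : ℝ) ≤ t → ¬ ((p : ℤ) ∣ (n - b))

def inSBetween (w t : ℝ) (b n : ℤ) : Prop :=
  ∀ p : ℕ, p.Prime → w < (p : ℝ) → (p : ℝ) ≤ t → ¬ ((p : ℤ) ∣ (n - b))

noncomputable def countS (t : ℝ) (b lo hi : ℤ) : ℕ :=
  ((Finset.Icc lo hi).filter (inS t b)).card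

noncomputable def EE (δ x : ℝ) (g : ℤ → ℝ) : ℝ :=
  (1 / (PP (zz δ x) : ℝ)) * ∑ b ∈ Finset.range (PP (zz δ x)), g (b : ℤ)

def frakH (δ ξ x : ℝ) : Set ℝ :=
  {H | ∃ j : ℕ, H = ξ ^ j ∧ 2 * (yy δ x : ℝ) / x ≤ H ∧ H ≤ (yy δ x : ℝ) / (ξ * zz δ x)}

def frakH1 (δ ξ x : ℝ) : Set ℝ :=
  {H | ∃ j : ℕ, Even j ∧ H = ξ ^ j ∧ 2 * (yy δ x : ℝ) / x ≤ H ∧ H ≤ (yy δ x : ℝ) / (ξ * zz δ x)}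

def frakH2 (δ ξ x : ℝ) : Set ℝ :=
  {H | ∃ j : ℕ, Odd j ∧ H = ξ ^ j ∧ 2 * (yy δ x : ℝ) / x ≤ H ∧ H ≤ (yy δ x : ℝ) / (ξ * zz δ x)}

noncomputable def QH (δ ξ x H : ℝ) : Finset ℕ :=
  (Finset.range (⌊(yy δ x : ℝ) / H⌋₊ + 1)).filter fun q =>
    q.Prime ∧ (yy δ x : ℝ) / (ξ * H) < (q : ℝ) ∧ (q : ℝ) ≤ (yy δ x : ℝ) / H

noncomputable def Hq (δ ξ x : ℝ) (q : ℕ) : ℝ :=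
  if h : ∃ H ∈ frakH δ ξ x, (yy δ x : ℝ) / (ξ * H) < (q : ℝ) ∧ (q : ℝ) ≤ (yy δ x : ℝ) / H
  then h.choose else 1

noncomputable def APset (M : ℝ) (K : ℕ) (b : ℤ) (H : ℝ) (q : ℕ) (n : ℤ) : Finset ℤ :=
  ((Finset.Icc 1 ⌊(K : ℝ) * H⌋₊).image fun h : ℕ => n + (q : ℤ) * (h : ℤ)).filter (inS (H ^ M) b)

noncomputable def lam (M zv : ℝ) (K : ℕ) (b : ℤ) (H : ℝ) (q : ℕ) (n : ℤ) : ℝ :=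
  if ∀ m ∈ APset M K b H q n, inSBetween (H ^ M) zv b m
  then sigBetween (H ^ M) zv ^ (-((APset M K b H q n).card : ℤ))
  else 0

noncomputable def APsetStar (M : ℝ) (K : ℕ) (N b : ℤ) (H : ℝ) (q : ℕ) (n : ℤ) : Finset ℤ :=
  ((Finset.Icc 1 ⌊(K : ℝ) * H⌋₊).image fun h : ℕ => n - (q : ℤ) * (h : ℤ)).filter (inS (H ^ M) (-N - b))

noncomputable def lamStar (M zv : ℝ) (K : ℕ) (N b : ℤ) (H : ℝ) (q : ℕ) (n : ℤ) : ℝ :=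
  if ∀ m ∈ APsetStar M K N b H q n, inSBetween (H ^ M) zv (-N - b) m
  then sigBetween (H ^ M) zv ^ (-((APsetStar M K N b H q n).card : ℤ))
  else 0

/-- Chinese remainder theorem, counting form: local conditions modulo distinct primes are
independent. -/
lemma card_filter_range_prod_primes (s : Finset ℕ) (hs : ∀ p ∈ s, p.Prime)
    (A : ℕ → ℕ → Prop) (hA : ∀ p b, A p (b % p) ↔ A p b) :
    ((Finset.range (∏ p ∈ s, p)).filter fun b => ∀ p ∈ s, A p b).card =
      ∏ p ∈ s, ((Finset.range p).filter (A p)).card := by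
  induction s using Finset.induction_on with
  | empty => simp
  | insert q s hq ih =>
    have hs' : ∀ p ∈ s, p.Prime := fun p hp => hs p (Finset.mem_insert_of_mem hp)
    have hqp : q.Prime := hs q (Finset.mem_insert_self _ _)
    rw [Finset.prod_insert hq, Finset.prod_insert hq, ← ih hs', ← Finset.card_product]
    have hco : Nat.Coprime q (∏ p ∈ s, p) :=
      Nat.Coprime.prod_right fun p hp =>
        (Nat.coprime_primes hqp (hs' p hp)).2 fun h => hq (h ▸ hp)
    have hQ : 0 < ∏ p ∈ s, p := Finset.prod_pos fun p hp => (hs' p hp).pos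
    have hmod : ∀ p ∈ s, ∀ b, A p (b % ∏ p ∈ s, p) ↔ A p b := fun p hp b => by
      rw [← hA p (b % _), Nat.mod_mod_of_dvd _ (Finset.dvd_prod_of_mem _ hp), hA]
    refine Finset.card_bij (fun b _ => (b % q, b % ∏ p ∈ s, p)) ?_ ?_ ?_
    · intro b hb
      simp only [Finset.mem_filter, Finset.mem_range, Finset.mem_insert, forall_eq_or_imp,
        Finset.mem_product] at hb ⊢
      exact ⟨⟨Nat.mod_lt _ hqp.pos, (hA q b).2 hb.2.1⟩, Nat.mod_lt _ hQ,
        fun p hp => (hmod p hp b).2 (hb.2.2 p hp)⟩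
    · intro b hb c hc h
      simp only [Finset.mem_filter, Finset.mem_range] at hb hc
      simp only [Prod.mk.injEq] at h
      have : b ≡ c [MOD q * ∏ p ∈ s, p] := (Nat.modEq_and_modEq_iff_modEq_mul hco).1 h
      exact this.eq_of_lt_of_lt hb.1 hc.1
    · rintro ⟨u, v⟩ huv
      simp only [Finset.mem_filter, Finset.mem_range, Finset.mem_product] at huv
      obtain ⟨⟨hu, hAu⟩, hv, hAv⟩ := huv
      have h1 : (Nat.chineseRemainder hco u v : ℕ) % q = u := by
        rw [(Nat.chineseRemainder hco u v).2.1, Nat.mod_eq_of_lt hu]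
      have h2 : (Nat.chineseRemainder hco u v : ℕ) % (∏ p ∈ s, p) = v := by
        rw [(Nat.chineseRemainder hco u v).2.2, Nat.mod_eq_of_lt hv]
      refine ⟨Nat.chineseRemainder hco u v, ?_, by simp only [h1, h2]⟩
      simp only [Finset.mem_filter, Finset.mem_range, Finset.mem_insert, forall_eq_or_imp]
      refine ⟨Nat.chineseRemainder_lt_mul hco u v hqp.ne_zero hQ.ne', ?_, fun p hp => ?_⟩
      · rw [← hA, h1]; exact hAu
      · rw [← hmod p hp, h2]; exact hAv p hp

lemma card_filter_range_not_dvd_sub (p : ℕ) (hp : 0 < p) (m n : ℤ) :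
    (((Finset.range p).filter fun b : ℕ =>
      ¬ (p : ℤ) ∣ m - (b : ℤ) ∧ ¬ (p : ℤ) ∣ n - (b : ℤ)).card : ℝ) =
      (p - 2) + if (p : ℤ) ∣ m - n then 1 else 0 := by
  have hp' : (0 : ℤ) < p := by exact_mod_cast hp
  have key : ∀ (k : ℤ) (b : ℕ), b < p → ((p : ℤ) ∣ k - b ↔ b = (k % p).toNat) := by
    intro k b hb
    have h0 := Int.emod_nonneg k hp'.ne'
    have hb' : (b : ℤ) % p = b := Int.emod_eq_of_lt (by positivity) (by exact_mod_cast hb)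
    rw [← Int.modEq_iff_dvd, Int.ModEq, hb']
    omega
  have hmem : ∀ k : ℤ, (k % p).toNat ∈ Finset.range p := fun k => by
    have h0 := Int.emod_nonneg k hp'.ne'
    have h1 := Int.emod_lt_of_pos k hp'
    rw [Finset.mem_range]; omega
  have hset : ((Finset.range p).filter fun b : ℕ =>
      ¬ (p : ℤ) ∣ m - (b : ℤ) ∧ ¬ (p : ℤ) ∣ n - (b : ℤ)) =
      Finset.range p \ {(m % p).toNat, (n % p).toNat} := by
    ext b
    simp only [Finset.mem_filter, Finset.mem_sdiff, Finset.mem_insert, Finset.mem_singleton,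
      not_or]
    refine and_congr_right fun hb => ?_
    rw [key m b (Finset.mem_range.1 hb), key n b (Finset.mem_range.1 hb)]
  have hsub : ({(m % p).toNat, (n % p).toNat} : Finset ℕ) ⊆ Finset.range p := by
    simp [Finset.insert_subset_iff, hmem m, hmem n, -Finset.mem_range]
  rw [hset, Finset.cast_card_sdiff hsub, Finset.card_range]
  have heq : (p : ℤ) ∣ m - n ↔ (m % p).toNat = (n % p).toNat := by
    have h0 := Int.emod_nonneg m hp'.ne'
    have h1 := Int.emod_nonneg n hp'.ne'
    rw [← Int.modEq_iff_dvd, Int.ModEq]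
    omega
  by_cases h : (p : ℤ) ∣ m - n
  · rw [if_pos h, heq.1 h]; simp; ring
  · rw [if_neg h, Finset.card_pair (mt heq.2 h)]; simp

lemma abs_card_filter_dvd_sub_sub_le (y g : ℕ) (hg : 0 < g) (n : ℤ) :
    |(((Finset.Icc (1 : ℤ) y).filter fun m => (g : ℤ) ∣ m - n).card : ℝ) - y / g| ≤ 1 := by
  have hg' : (0 : ℤ) < g := by exact_mod_cast hg
  have h := Int.Ioc_filter_modEq_card 0 (y : ℤ) hg' n
  have hset : (Finset.Icc (1 : ℤ) y).filter (fun m => (g : ℤ) ∣ m - n) =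
      (Finset.Ioc (0 : ℤ) y).filter (fun m => m ≡ n [ZMOD g]) := by
    ext m
    simp only [Finset.mem_filter, Finset.mem_Icc, Finset.mem_Ioc, Int.modEq_iff_dvd,
      dvd_sub_comm (b := m)]
    rfl
  rw [hset]
  have hle : ⌊(((0 : ℤ) : ℚ) - n) / ((g : ℤ) : ℚ)⌋ ≤ ⌊(((y : ℤ) : ℚ) - n) / ((g : ℤ) : ℚ)⌋ := by
    gcongr
    positivity
  rw [max_eq_left (by linarith)] at h
  have hQ : |(((Finset.Ioc (0 : ℤ) y).filter (fun m => m ≡ n [ZMOD g])).card : ℚ) - y / g| ≤ 1 := by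
    have h' : (((Finset.Ioc (0 : ℤ) y).filter (fun m => m ≡ n [ZMOD g])).card : ℚ) =
        ⌊(((y : ℤ) : ℚ) - n) / ((g : ℤ) : ℚ)⌋ - ⌊(((0 : ℤ) : ℚ) - n) / ((g : ℤ) : ℚ)⌋ := by
      exact_mod_cast h
    have e : (y : ℚ) / g = (((y : ℤ) : ℚ) - n) / ((g : ℤ) : ℚ) -
        (((0 : ℤ) : ℚ) - n) / ((g : ℤ) : ℚ) := by
      push_cast; ring
    rw [h', e, abs_le]
    constructor <;>
    linarith [Int.floor_le ((((y : ℤ) : ℚ) - n) / ((g : ℤ) : ℚ)),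
      Int.lt_floor_add_one ((((y : ℤ) : ℚ) - n) / ((g : ℤ) : ℚ)),
      Int.floor_le ((((0 : ℤ) : ℚ) - n) / ((g : ℤ) : ℚ)),
      Int.lt_floor_add_one ((((0 : ℤ) : ℚ) - n) / ((g : ℤ) : ℚ))]
  have hR := (Rat.cast_le (K := ℝ)).2 hQ
  push_cast at hR
  exact hR

/-- The number of elements of `[1, y]` avoiding the residue class of `b` modulo every `p ∈ s`. -/
noncomputable def siftedCount (s : Finset ℕ) (y : ℕ) (b : ℤ) : ℕ :=
  ((Finset.Icc (1 : ℤ) y).filter fun n => ∀ p ∈ s, ¬ (p : ℤ) ∣ n - b).card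

lemma card_avoiding_pair (s : Finset ℕ) (hs : ∀ p ∈ s, p.Prime) (m n : ℤ) :
    (((Finset.range (∏ p ∈ s, p)).filter fun b : ℕ =>
      (∀ p ∈ s, ¬ (p : ℤ) ∣ m - b) ∧ ∀ p ∈ s, ¬ (p : ℤ) ∣ n - b).card : ℝ) =
      ∏ p ∈ s, (((p : ℝ) - 2) + if (p : ℤ) ∣ m - n then 1 else 0) := by
  have hmod : ∀ (k : ℤ) (p b : ℕ), (p : ℤ) ∣ k - ((b % p : ℕ) : ℤ) ↔ (p : ℤ) ∣ k - b := by
    intro k p b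
    rw [← Int.modEq_iff_dvd, ← Int.modEq_iff_dvd, Int.ModEq, Int.ModEq]
    simp
  have h : ((Finset.range (∏ p ∈ s, p)).filter fun b : ℕ =>
      ∀ p ∈ s, ¬ (p : ℤ) ∣ m - b ∧ ¬ (p : ℤ) ∣ n - b).card =
      ∏ p ∈ s, ((Finset.range p).filter fun b : ℕ =>
        ¬ (p : ℤ) ∣ m - b ∧ ¬ (p : ℤ) ∣ n - b).card := by
    convert card_filter_range_prod_primes s hs
      (fun p b => ¬ (p : ℤ) ∣ m - b ∧ ¬ (p : ℤ) ∣ n - b) (fun p b => by simp only [hmod])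
  have hset : ((Finset.range (∏ p ∈ s, p)).filter fun b : ℕ =>
      (∀ p ∈ s, ¬ (p : ℤ) ∣ m - b) ∧ ∀ p ∈ s, ¬ (p : ℤ) ∣ n - b) =
      (Finset.range (∏ p ∈ s, p)).filter fun b : ℕ =>
        ∀ p ∈ s, ¬ (p : ℤ) ∣ m - b ∧ ¬ (p : ℤ) ∣ n - b := by
    ext b
    simp only [Finset.mem_filter]
    exact and_congr_right fun _ => ⟨fun h p hp => ⟨h.1 p hp, h.2 p hp⟩,
      fun h => ⟨fun p hp => (h p hp).1, fun p hp => (h p hp).2⟩⟩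
  rw [hset, h, Nat.cast_prod]
  exact Finset.prod_congr rfl fun p hp => card_filter_range_not_dvd_sub p (hs p hp).pos m n

lemma sum_siftedCount (s : Finset ℕ) (hs : ∀ p ∈ s, p.Prime) (y : ℕ) :
    ∑ b ∈ Finset.range (∏ p ∈ s, p), (siftedCount s y (b : ℤ) : ℝ) =
      y * ∏ p ∈ s, ((p : ℝ) - 1) := by
  simp only [siftedCount, Finset.card_filter, Nat.cast_sum]
  rw [Finset.sum_comm]
  have : ∀ n ∈ Finset.Icc (1 : ℤ) y, ∑ b ∈ Finset.range (∏ p ∈ s, p),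
      (((if ∀ p ∈ s, ¬ (p : ℤ) ∣ n - (b : ℤ) then 1 else 0 : ℕ)) : ℝ) =
      ∏ p ∈ s, ((p : ℝ) - 1) := by
    intro n _
    have h := card_avoiding_pair s hs n n
    simp only [and_self, sub_self, dvd_zero, if_true] at h
    rw [← Nat.cast_sum, ← Finset.card_filter, h]
    exact Finset.prod_congr rfl fun p _ => by ring
  rw [Finset.sum_congr rfl this]
  simp

lemma sum_siftedCount_sq (s : Finset ℕ) (hs : ∀ p ∈ s, p.Prime) (y : ℕ) :
    ∑ b ∈ Finset.range (∏ p ∈ s, p), (siftedCount s y (b : ℤ) : ℝ) ^ 2 =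
      ∑ m ∈ Finset.Icc (1 : ℤ) y, ∑ n ∈ Finset.Icc (1 : ℤ) y,
        ∏ p ∈ s, ((if (p : ℤ) ∣ m - n then (1 : ℝ) else 0) + ((p : ℝ) - 2)) := by
  have : ∀ b : ℕ, (siftedCount s y (b : ℤ) : ℝ) ^ 2 =
      ∑ m ∈ Finset.Icc (1 : ℤ) y, ∑ n ∈ Finset.Icc (1 : ℤ) y,
        (if (∀ p ∈ s, ¬ (p : ℤ) ∣ m - (b : ℤ)) ∧ ∀ p ∈ s, ¬ (p : ℤ) ∣ n - (b : ℤ)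
          then (1 : ℝ) else 0) := by
    intro b
    simp only [siftedCount, Finset.card_filter, Nat.cast_sum, sq, Finset.sum_mul_sum]
    refine Finset.sum_congr rfl fun m _ => Finset.sum_congr rfl fun n _ => ?_
    rw [ite_and]
    split_ifs <;> simp
  simp only [this]
  rw [Finset.sum_comm]
  refine Finset.sum_congr rfl fun m _ => ?_
  rw [Finset.sum_comm]
  refine Finset.sum_congr rfl fun n _ => ?_
  rw [← Finset.natCast_card_filter, card_avoiding_pair s hs m n]
  exact Finset.prod_congr rfl fun p _ => add_comm _ _

lemma abs_sum_siftedCount_sq_sub_le (s : Finset ℕ) (hs : ∀ p ∈ s, p.Prime) (y : ℕ) :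
    |(∑ b ∈ Finset.range (∏ p ∈ s, p), (siftedCount s y (b : ℤ) : ℝ) ^ 2) -
      (y : ℝ) ^ 2 * ∏ p ∈ s, (1 / (p : ℝ) + ((p : ℝ) - 2))| ≤ y * ∏ p ∈ s, ((p : ℝ) - 1) := by
  have hexp : ∀ m n : ℤ,
      ∏ p ∈ s, ((if (p : ℤ) ∣ m - n then (1 : ℝ) else 0) + ((p : ℝ) - 2)) =
      ∑ t ∈ s.powerset, (if ((∏ p ∈ t, p : ℕ) : ℤ) ∣ m - n then (1 : ℝ) else 0) *
        ∏ p ∈ s \ t, ((p : ℝ) - 2) := by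
    intro m n
    rw [Finset.prod_add]
    refine Finset.sum_congr rfl fun t ht => ?_
    congr 1
    rw [Finset.mem_powerset] at ht
    have hiff : ((∏ p ∈ t, p : ℕ) : ℤ) ∣ m - n ↔ ∀ p ∈ t, (p : ℤ) ∣ m - n := by
      simp only [Int.natCast_dvd]
      constructor
      · exact fun h p hp => (Finset.dvd_prod_of_mem _ hp).trans h
      · intro h
        exact Finset.prod_primes_dvd _ (fun p hp => (hs p (ht hp)).prime) h
    rw [Finset.prod_ite_zero]
    simp only [hiff, Finset.prod_const_one]
  have hsum : (∑ b ∈ Finset.range (∏ p ∈ s, p), (siftedCount s y (b : ℤ) : ℝ) ^ 2) =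
      ∑ t ∈ s.powerset, (∑ n ∈ Finset.Icc (1 : ℤ) y,
        (((Finset.Icc (1 : ℤ) y).filter fun m => ((∏ p ∈ t, p : ℕ) : ℤ) ∣ m - n).card : ℝ)) *
        ∏ p ∈ s \ t, ((p : ℝ) - 2) := by
    rw [sum_siftedCount_sq s hs y]
    simp only [hexp, Finset.natCast_card_filter, Finset.sum_mul]
    rw [Finset.sum_comm]
    simp only [Finset.sum_comm (t := s.powerset)]
  have hmain : (y : ℝ) ^ 2 * ∏ p ∈ s, (1 / (p : ℝ) + ((p : ℝ) - 2)) =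
      ∑ t ∈ s.powerset, (∑ n ∈ Finset.Icc (1 : ℤ) y, (y : ℝ) / ((∏ p ∈ t, p : ℕ) : ℝ)) *
        ∏ p ∈ s \ t, ((p : ℝ) - 2) := by
    rw [Finset.prod_add, Finset.mul_sum]
    refine Finset.sum_congr rfl fun t _ => ?_
    simp [Finset.prod_inv_distrib]
    ring
  have herr : (y : ℝ) * ∏ p ∈ s, ((p : ℝ) - 1) =
      ∑ t ∈ s.powerset, (y : ℝ) * ∏ p ∈ s \ t, ((p : ℝ) - 2) := by
    have h1 : ∀ p ∈ s, (p : ℝ) - 1 = 1 + ((p : ℝ) - 2) := fun p _ => by ring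
    rw [← Finset.mul_sum, Finset.prod_congr rfl h1, Finset.prod_add]
    simp
  rw [hsum, hmain, herr, ← Finset.sum_sub_distrib]
  refine (Finset.abs_sum_le_sum_abs _ _).trans (Finset.sum_le_sum fun t ht => ?_)
  rw [Finset.mem_powerset] at ht
  have hnn : 0 ≤ ∏ p ∈ s \ t, ((p : ℝ) - 2) := Finset.prod_nonneg fun p hp => by
    have : (2 : ℝ) ≤ p := by exact_mod_cast (hs p (Finset.mem_sdiff.1 hp).1).two_le
    linarith
  rw [← sub_mul, abs_mul, abs_of_nonneg hnn, ← Finset.sum_sub_distrib]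
  refine mul_le_mul_of_nonneg_right ?_ hnn
  refine (Finset.abs_sum_le_sum_abs _ _).trans ?_
  refine (Finset.sum_le_sum fun n _ => abs_card_filter_dvd_sub_sub_le y _
    (Finset.prod_pos fun p hp => (hs p (ht hp)).pos) n).trans ?_
  simp

lemma prod_primes_one_sub_inv_sq_ge (k : ℕ) :
    1 / (4 * (2 * (k : ℝ) + 1)) ≤
      (∏ p ∈ (Finset.range (2 * k + 3)).filter Nat.Prime, (1 - 1 / (p : ℝ))) ^ 2 := by
  induction k with
  | zero =>
    have : (Finset.range (2 * 0 + 3)).filter Nat.Prime = {2} := by decide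
    rw [this]; norm_num
  | succ k ih =>
    have hnp : ¬ (2 * k + 4).Prime := fun h => by
      have := h.eq_one_or_self_of_dvd 2 ⟨k + 2, by ring⟩
      omega
    have e : 2 * (k + 1) + 3 = (2 * k + 3) + 1 + 1 := by ring
    rw [e, Finset.range_add_one, Finset.filter_insert, if_neg hnp, Finset.range_add_one,
      Finset.filter_insert]
    have hk : (0 : ℝ) ≤ k := k.cast_nonneg
    split_ifs with h
    · rw [Finset.prod_insert (by simp), mul_pow]
      have h1 : (2 * (k : ℝ) + 1) / (2 * k + 3) ≤ (1 - 1 / ((2 * k + 3 : ℕ) : ℝ)) ^ 2 := by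
        push_cast
        rw [one_sub_div (by positivity), div_pow, div_le_div_iff₀ (by positivity) (by positivity)]
        nlinarith
      refine le_trans (le_of_eq ?_) (mul_le_mul h1 ih (by positivity) (by positivity))
      push_cast
      field_simp
      ring
    · refine le_trans ?_ ih
      push_cast
      gcongr
      linarith

lemma prod_primes_one_sub_inv_ge {s : Finset ℕ} (hs : ∀ p ∈ s, p.Prime) {y : ℕ} (hy : 1 ≤ y)
    (hle : ∀ p ∈ s, p ≤ y) : 1 / (4 * √(y : ℝ)) ≤ ∏ p ∈ s, (1 - 1 / (p : ℝ)) := by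
  have hfac : ∀ p : ℕ, p.Prime → 0 ≤ 1 - 1 / (p : ℝ) ∧ 1 - 1 / (p : ℝ) ≤ 1 := fun p hp => by
    have h2 : (2 : ℝ) ≤ p := by exact_mod_cast hp.two_le
    have : 1 / (p : ℝ) ≤ 1 := by rw [div_le_one (by linarith)]; linarith
    have : 0 ≤ 1 / (p : ℝ) := by positivity
    constructor <;> linarith
  have hsub : s ⊆ (Finset.range (2 * y + 3)).filter Nat.Prime := fun p hp => by
    have := hle p hp
    simp only [Finset.mem_filter, Finset.mem_range]
    exact ⟨by omega, hs p hp⟩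
  have hmono : (∏ p ∈ (Finset.range (2 * y + 3)).filter Nat.Prime, (1 - 1 / (p : ℝ))) ≤
      ∏ p ∈ s, (1 - 1 / (p : ℝ)) := by
    refine Finset.prod_le_prod_of_subset_of_le_one hsub
      (fun p hp => (hfac p (Finset.mem_filter.1 hp).2).1)
      (fun p hp _ => (hfac p (Finset.mem_filter.1 hp).2).2)
  refine le_trans (abs_le_of_sq_le_sq' ?_ (Finset.prod_nonneg fun p hp =>
    (hfac p (Finset.mem_filter.1 hp).2).1)).2 hmono
  refine le_trans ?_ (prod_primes_one_sub_inv_sq_ge y)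
  have hy' : (1 : ℝ) ≤ y := by exact_mod_cast hy
  rw [div_pow, mul_pow, Real.sq_sqrt (by linarith), one_pow]
  exact one_div_le_one_div_of_le (by positivity) (by linarith)

lemma mem_primesUpTo {t : ℝ} {p : ℕ} : p ∈ primesUpTo t ↔ p.Prime ∧ (p : ℝ) ≤ t := by
  simp only [primesUpTo, Finset.mem_filter, Finset.mem_range, and_iff_right_iff_imp]
  exact fun h => Nat.lt_succ_of_le (Nat.le_floor h.2)

lemma countS_eq_siftedCount (t : ℝ) (y : ℕ) (b : ℤ) :
    countS t b 1 y = siftedCount (primesUpTo t) y b := by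
  simp only [countS, siftedCount, mem_primesUpTo, and_imp]
  congr 1

lemma sigUpTo_eq_div (t : ℝ) :
    sigUpTo t = (∏ p ∈ primesUpTo t, ((p : ℝ) - 1)) / PP t := by
  rw [sigUpTo, PP, Nat.cast_prod, ← Finset.prod_div_distrib]
  refine Finset.prod_congr rfl fun p hp => ?_
  have : (p : ℝ) ≠ 0 := by exact_mod_cast (mem_primesUpTo.1 hp).1.ne_zero
  field_simp

lemma sigUpTo_sq_eq_div (t : ℝ) :
    sigUpTo t ^ 2 = (∏ p ∈ primesUpTo t, (1 / (p : ℝ) + ((p : ℝ) - 2))) / PP t := by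
  rw [sigUpTo, PP, Nat.cast_prod, ← Finset.prod_div_distrib, ← Finset.prod_pow]
  refine Finset.prod_congr rfl fun p hp => ?_
  have : (p : ℝ) ≠ 0 := by exact_mod_cast (mem_primesUpTo.1 hp).1.ne_zero
  field_simp
  ring

lemma EE_countS (δ x : ℝ) :
    EE δ x (fun b => (countS (zz δ x) b 1 (yy δ x) : ℝ)) = sigUpTo (zz δ x) * (yy δ x) := by
  simp only [EE, countS_eq_siftedCount]
  rw [PP, sum_siftedCount _ (fun p hp => (mem_primesUpTo.1 hp).1), sigUpTo_eq_div, PP]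
  ring

/-- The variance of the sifted count is at most its mean. -/
lemma abs_EE_countS_sq_sub_le (δ x : ℝ) :
    |EE δ x (fun b => ((countS (zz δ x) b 1 (yy δ x) : ℝ)) ^ 2) -
      (sigUpTo (zz δ x) * (yy δ x)) ^ 2| ≤ sigUpTo (zz δ x) * (yy δ x) := by
  have h := abs_sum_siftedCount_sq_sub_le (primesUpTo (zz δ x))
    (fun p hp => (mem_primesUpTo.1 hp).1) (yy δ x)
  have hP : (0 : ℝ) ≤ 1 / (PP (zz δ x) : ℝ) := by positivity
  have h' := mul_le_mul_of_nonneg_left h hP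
  rw [← abs_of_nonneg hP, ← abs_mul, abs_of_nonneg hP] at h'
  simp only [EE, countS_eq_siftedCount]
  rw [mul_pow, sigUpTo_sq_eq_div, sigUpTo_eq_div]
  rw [← PP] at h'
  refine (le_of_eq ?_).trans (h'.trans (le_of_eq (by ring)))
  congr 1
  ring

lemma eventually_two_le_yy {δ : ℝ} (hδ : 0 < δ) : ∀ᶠ x in Filter.atTop, 2 ≤ yy δ x := by
  filter_upwards [Filter.eventually_ge_atTop (2 : ℝ),
    Real.tendsto_log_atTop.eventually_ge_atTop 1] with x hx hlog
  have h : (2 : ℝ) ≤ x * Real.log x ^ δ := by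
    nlinarith [Real.one_le_rpow hlog hδ.le]
  exact_mod_cast h.trans (Nat.le_ceil _)

lemma eventually_zz_le_yy (δ : ℝ) : ∀ᶠ x in Filter.atTop, zz δ x ≤ yy δ x := by
  have h := (isLittleO_log_rpow_atTop (show (0 : ℝ) < 1 / 4 by norm_num)).bound one_pos
  filter_upwards [Real.tendsto_log_atTop.eventually h,
    Real.tendsto_log_atTop.eventually_gt_atTop 0] with x hx hpos
  have hsq : Real.log (Real.log x) ^ 2 ≤ Real.log x ^ (1 / 2 : ℝ) := by
    rw [one_mul, Real.norm_eq_abs, Real.norm_of_nonneg (by positivity)] at hx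
    calc Real.log (Real.log x) ^ 2 = |Real.log (Real.log x)| ^ 2 := (sq_abs _).symm
      _ ≤ (Real.log x ^ (1 / 4 : ℝ)) ^ 2 := by gcongr
      _ = Real.log x ^ (1 / 2 : ℝ) := by
        rw [← Real.rpow_natCast, ← Real.rpow_mul hpos.le]; norm_num
  rw [zz, div_le_iff₀ (by positivity)]
  gcongr

lemma log_le_two_mul_sqrt {y : ℝ} (hy : 0 < y) : Real.log y ≤ 2 * √y := by
  have h := Real.log_le_sub_one_of_pos (Real.sqrt_pos.2 hy)
  rw [Real.log_sqrt hy.le] at h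
  linarith

theorem stmt1 (δ M : ℝ) (K : ℕ) (ξ : ℝ)
    (hδ0 : 0 < δ) (hδ1 : δ < 1/2) (hK : 2 ≤ K) (hξ : 1 < ξ) :
    (∃ x₀ : ℝ, ∀ x ≥ x₀,
      EE δ x (fun b => (countS (zz δ x) b 1 (yy δ x) : ℝ)) =
        sigUpTo (zz δ x) * (yy δ x)) ∧
    (∃ C : ℝ, 0 < C ∧ ∃ x₀ : ℝ, ∀ x ≥ x₀,
      |EE δ x (fun b => ((countS (zz δ x) b 1 (yy δ x) : ℝ)) ^ 2) -
          (sigUpTo (zz δ x) * (yy δ x)) ^ 2| ≤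
        C * (sigUpTo (zz δ x) * (yy δ x)) ^ 2 / Real.log (yy δ x)) := by
  refine ⟨⟨0, fun x _ => EE_countS δ x⟩, 8, by norm_num, ?_⟩
  obtain ⟨x₀, hx₀⟩ := Filter.eventually_atTop.1
    ((eventually_two_le_yy hδ0).and (eventually_zz_le_yy δ))
  refine ⟨x₀, fun x hx => (abs_EE_countS_sq_sub_le δ x).trans ?_⟩
  obtain ⟨hy, hz⟩ := hx₀ x hx
  have hyR : (2 : ℝ) ≤ yy δ x := by exact_mod_cast hy
  have hσ : 1 / (4 * √(yy δ x : ℝ)) ≤ sigUpTo (zz δ x) :=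
    prod_primes_one_sub_inv_ge (fun p hp => (mem_primesUpTo.1 hp).1) (by omega)
      (fun p hp => by exact_mod_cast (mem_primesUpTo.1 hp).2.trans hz)
  have hs : 0 < √(yy δ x : ℝ) := Real.sqrt_pos.2 (by linarith)
  have hmean : √(yy δ x : ℝ) / 4 ≤ sigUpTo (zz δ x) * yy δ x := by
    refine le_trans (le_of_eq ?_) (mul_le_mul_of_nonneg_right hσ (by linarith))
    field_simp
    rw [Real.sq_sqrt (by linarith)]
  have hlog := log_le_two_mul_sqrt (y := yy δ x) (by linarith)
  rw [le_div_iff₀ (Real.log_pos (by linarith))]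
  nlinarith
end

section
/- For every integer N, one has E[#(S_z(−N−b) ∩ [−y,−1])] = σ_z·y exactly, and there exist C > 0 and x₀ (depending only on δ, M, K, ξ) such that for all x ≥ x₀ and all integers N, |E[(#(S_z(−N−b) ∩ [−y,−1]))²] − (σ_z y)²| ≤ C·(σ_z y)²/ln y, where y and z are as in the setup. -/
open scoped Classical

/-- The real-valued indicator of `d ∣ a`. -/
noncomputable def dvdInd (d : ℕ) (a : ℤ) : ℝ := if (d : ℤ) ∣ a then 1 else 0

lemma dvdInd_congr (d : ℕ) {a c : ℤ} (h : (d : ℤ) ∣ a - c) : dvdInd d a = dvdInd d c := by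
  unfold dvdInd
  simp only [(dvd_iff_dvd_of_dvd_sub h : (d : ℤ) ∣ a ↔ (d : ℤ) ∣ c)]

lemma dvdInd_add_mod (d : ℕ) (a : ℤ) (b : ℕ) :
    dvdInd d (a + (b % d : ℕ)) = dvdInd d (a + b) := by
  apply dvdInd_congr
  rw [show a + ((b % d : ℕ) : ℤ) - (a + b) = -(b - (b : ℤ) % d) by push_cast; ring, dvd_neg]
  exact Int.dvd_self_sub_emod

/-- The Chinese remainder theorem for sums of products of periodic functions. -/
lemma sum_range_mul_of_coprime {m n : ℕ} (hm : 0 < m) (hn : 0 < n) (hmn : m.Coprime n)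
    (f g : ℕ → ℝ) (hf : ∀ b, f (b % m) = f b) (hg : ∀ b, g (b % n) = g b) :
    ∑ b ∈ Finset.range (m * n), f b * g b =
      (∑ b ∈ Finset.range m, f b) * ∑ b ∈ Finset.range n, g b := by
  rw [Finset.sum_mul_sum, ← Finset.sum_product']
  refine Finset.sum_nbij (fun b => (b % m, b % n)) ?_ ?_ ?_ ?_
  · intro b _
    simp [Nat.mod_lt, hm, hn]
  · intro a ha b hb hab
    simp only [Prod.mk.injEq] at hab
    exact Nat.ModEq.eq_of_lt_of_lt ((Nat.modEq_and_modEq_iff_modEq_mul hmn).1 hab)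
      (by simpa using ha) (by simpa using hb)
  · rintro ⟨i, j⟩ hij
    simp only [Finset.coe_product, Finset.coe_range, Set.mem_prod, Set.mem_Iio] at hij
    obtain ⟨k, hk1, hk2⟩ := Nat.chineseRemainder hmn i j
    refine ⟨k % (m * n), by simpa using Nat.mod_lt _ (Nat.mul_pos hm hn), ?_⟩
    simp only [Prod.mk.injEq, Nat.mod_mul_right_mod, Nat.mod_mul_left_mod]
    exact ⟨Nat.mod_eq_of_modEq hk1 hij.1, Nat.mod_eq_of_modEq hk2 hij.2⟩
  · intro b _
    rw [hf, hg]

lemma sum_range_prod_primes (Q : Finset ℕ) (hQ : ∀ p ∈ Q, p.Prime) (F : ℕ → ℕ → ℝ)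
    (hF : ∀ p b, F p (b % p) = F p b) :
    ∑ b ∈ Finset.range (∏ p ∈ Q, p), ∏ p ∈ Q, F p b =
      ∏ p ∈ Q, ∑ b ∈ Finset.range p, F p b := by
  induction Q using Finset.induction_on with
  | empty => simp
  | insert q Q hq ih =>
    have hQ' : ∀ p ∈ Q, p.Prime := fun p hp => hQ p (Finset.mem_insert_of_mem hp)
    have hqp := hQ q (Finset.mem_insert_self q Q)
    simp only [Finset.prod_insert hq]
    rw [← ih hQ']
    refine sum_range_mul_of_coprime hqp.pos (Finset.prod_pos fun p hp => (hQ' p hp).pos)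
      (Nat.Coprime.prod_right fun p hp => ?_) _ _ (hF q) ?_
    · exact (Nat.coprime_primes hqp (hQ' p hp)).2 fun h => hq (h ▸ hp)
    · intro b
      refine Finset.prod_congr rfl fun p hp => ?_
      rw [← hF p, Nat.mod_mod_of_dvd _ (Finset.dvd_prod_of_mem _ hp), hF]

lemma sum_range_dvdInd {p : ℕ} (hp : 0 < p) (a : ℤ) :
    ∑ b ∈ Finset.range p, dvdInd p (a + b) = 1 := by
  have hp' : (0 : ℤ) < p := by exact_mod_cast hp
  obtain ⟨c, hc⟩ := Int.eq_ofNat_of_zero_le (Int.emod_nonneg (-a) hp'.ne')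
  have hc' : c < p := by
    have := Int.emod_lt_of_pos (-a) hp'
    omega
  have hac : (p : ℤ) ∣ a + c := by
    have h := @Int.dvd_self_sub_emod (-a) p
    rw [hc, ← dvd_neg] at h
    simpa [add_comm] using h
  rw [Finset.sum_eq_single c]
  · simp [dvdInd, hac]
  · intro b hb hbc
    rw [dvdInd, if_neg]
    intro hab
    have h := dvd_sub hab hac
    rw [add_sub_add_left_eq_sub] at h
    exact hbc (Nat.ModEq.eq_of_lt_of_lt
      ((Int.natCast_modEq_iff).1 (Int.modEq_iff_dvd.2 h).symm) (Finset.mem_range.1 hb) hc')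
  · intro h
    exact absurd (Finset.mem_range.2 hc') h

lemma sum_range_one_sub_dvdInd {p : ℕ} (hp : 0 < p) (a : ℤ) :
    ∑ b ∈ Finset.range p, (1 - dvdInd p (a + b)) = p * (1 - 1 / p) := by
  have : (p : ℝ) ≠ 0 := by positivity
  rw [Finset.sum_sub_distrib, sum_range_dvdInd hp]
  simp
  field_simp

lemma sum_range_one_sub_dvdInd_mul {p : ℕ} (hp : 0 < p) (a c : ℤ) :
    ∑ b ∈ Finset.range p, (1 - dvdInd p (a + b)) * (1 - dvdInd p (c + b)) =
      p * (1 / p * dvdInd p (a - c) + (1 - 2 / p)) := by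
  have hp0 : (p : ℝ) ≠ 0 := by positivity
  have hprod : ∀ b : ℕ, dvdInd p (a + b) * dvdInd p (c + b) =
      dvdInd p (a - c) * dvdInd p (a + b) := by
    intro b
    by_cases h : (p : ℤ) ∣ a + b
    · have : dvdInd p (a - c) = dvdInd p (c + b) := by
        simp only [dvdInd, show a - c = (a + b) - (c + b) by ring, dvd_sub_right h]
      rw [this, mul_comm]
    · simp [dvdInd, h]
  have : ∀ b : ℕ, (1 - dvdInd p (a + b)) * (1 - dvdInd p (c + b)) =
      1 - dvdInd p (a + b) - dvdInd p (c + b) + dvdInd p (a - c) * dvdInd p (a + b) := by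
    intro b
    rw [← hprod]
    ring
  simp only [this, Finset.sum_add_distrib, Finset.sum_sub_distrib, ← Finset.mul_sum,
    sum_range_dvdInd hp]
  simp
  field_simp
  ring

lemma prod_dvdInd (D : Finset ℕ) (hD : ∀ p ∈ D, p.Prime) (a : ℤ) :
    ∏ p ∈ D, dvdInd p a = dvdInd (∏ p ∈ D, p) a := by
  simp only [dvdInd, Finset.prod_ite_zero, Finset.prod_const_one]
  congr 1
  rw [eq_iff_iff]
  push_cast
  constructor
  · refine Finset.prod_dvd_of_coprime fun p hp q hq hpq => ?_
    exact Nat.isCoprime_iff_coprime.2 ((Nat.coprime_primes (hD p hp) (hD q hq)).2 hpq)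
  · exact fun h p hp => (Finset.dvd_prod_of_mem (fun p : ℕ => (p : ℤ)) hp).trans h

lemma abs_sum_dvdInd_sub_le {d : ℕ} (hd : 0 < d) (y : ℕ) (n : ℤ) :
    |∑ m ∈ Finset.Icc (-(y : ℤ)) (-1), dvdInd d (n - m) - y / d| ≤ 1 := by
  have hd' : (0 : ℤ) < d := by exact_mod_cast hd
  have hset : Finset.Icc (-(y : ℤ)) (-1) = Finset.Ioc (-(y : ℤ) - 1) (-1) := by
    ext m
    simp only [Finset.mem_Icc, Finset.mem_Ioc]
    omega
  have hcard := Int.Ioc_filter_modEq_card (-(y : ℤ) - 1) (-1) hd' n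
  have hsum : ∑ m ∈ Finset.Icc (-(y : ℤ)) (-1), dvdInd d (n - m) =
      (((Finset.Ioc (-(y : ℤ) - 1) (-1)).filter fun m => m ≡ n [ZMOD d]).card : ℝ) := by
    simp only [dvdInd, hset, Finset.sum_boole, Int.modEq_iff_dvd]
  set c := ((Finset.Ioc (-(y : ℤ) - 1) (-1)).filter fun m => m ≡ n [ZMOD d]).card
  rw [hsum]
  have hle : (((-(y : ℤ) - 1 : ℤ) : ℚ) - n) / ((d : ℤ) : ℚ) ≤
      (((-1 : ℤ) : ℚ) - n) / ((d : ℤ) : ℚ) := by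
    gcongr
    simp
  rw [max_eq_left (sub_nonneg.2 (Int.floor_le_floor hle))] at hcard
  have h1 := Int.floor_le ((((-1 : ℤ) : ℚ) - n) / ((d : ℤ) : ℚ))
  have h2 := Int.lt_floor_add_one ((((-1 : ℤ) : ℚ) - n) / ((d : ℤ) : ℚ))
  have h3 := Int.floor_le ((((-(y : ℤ) - 1 : ℤ) : ℚ) - n) / ((d : ℤ) : ℚ))
  have h4 := Int.lt_floor_add_one ((((-(y : ℤ) - 1 : ℤ) : ℚ) - n) / ((d : ℤ) : ℚ))
  have hcQ : (c : ℚ) = (⌊(((-1 : ℤ) : ℚ) - n) / ((d : ℤ) : ℚ)⌋ : ℚ) -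
      ⌊(((-(y : ℤ) - 1 : ℤ) : ℚ) - n) / ((d : ℤ) : ℚ)⌋ := by exact_mod_cast hcard
  have hdiff : (((-1 : ℤ) : ℚ) - n) / ((d : ℤ) : ℚ) -
      (((-(y : ℤ) - 1 : ℤ) : ℚ) - n) / ((d : ℤ) : ℚ) = y / d := by
    push_cast
    ring
  have hq : |(c : ℚ) - y / d| ≤ 1 := by
    rw [abs_le]
    constructor <;> linarith
  have hqR : |(((c : ℚ) - y / d : ℚ) : ℝ)| ≤ 1 := by exact_mod_cast hq
  simpa using hqR

lemma abs_sum_sum_dvdInd_sub_le {d : ℕ} (hd : 0 < d) (y : ℕ) :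
    |∑ n ∈ Finset.Icc (-(y : ℤ)) (-1), ∑ m ∈ Finset.Icc (-(y : ℤ)) (-1), dvdInd d (n - m) -
      (y : ℝ) ^ 2 / d| ≤ y := by
  have hcard : (Finset.Icc (-(y : ℤ)) (-1)).card = y := by simp
  have : (y : ℝ) ^ 2 / d = ∑ _n ∈ Finset.Icc (-(y : ℤ)) (-1), (y : ℝ) / d := by
    rw [Finset.sum_const, hcard, nsmul_eq_mul]
    ring
  rw [this, ← Finset.sum_sub_distrib]
  refine (Finset.abs_sum_le_sum_abs _ _).trans
    ((Finset.sum_le_sum fun n _ => abs_sum_dvdInd_sub_le hd y n).trans ?_)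
  simp

/-- The sum of the pair correlations `∏ (1 - ν_p(n - m) / p)` over a square of side `y` is
`(σ y) ^ 2` up to `σ y`. -/
lemma abs_sum_pair_sub_le (Q : Finset ℕ) (hQ : ∀ p ∈ Q, p.Prime) (y : ℕ) :
    |∑ n ∈ Finset.Icc (-(y : ℤ)) (-1), ∑ m ∈ Finset.Icc (-(y : ℤ)) (-1),
        ∏ p ∈ Q, (1 / (p : ℝ) * dvdInd p (n - m) + (1 - 2 / p)) -
      ((∏ p ∈ Q, (1 - 1 / (p : ℝ))) * y) ^ 2| ≤ (∏ p ∈ Q, (1 - 1 / (p : ℝ))) * y := by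
  set w : Finset ℕ → ℝ := fun D => (∏ p ∈ D, 1 / (p : ℝ)) * ∏ p ∈ Q \ D, (1 - 2 / (p : ℝ))
  set I := Finset.Icc (-(y : ℤ)) (-1)
  have hw : ∀ D ∈ Q.powerset, 0 ≤ w D := by
    intro D _
    refine mul_nonneg (Finset.prod_nonneg fun p _ => by positivity)
      (Finset.prod_nonneg fun p hp => ?_)
    have h2 : (2 : ℝ) ≤ p := by exact_mod_cast (hQ p (Finset.mem_sdiff.1 hp).1).two_le
    rw [sub_nonneg, div_le_one (by linarith)]
    exact h2
  have hsum : ∑ n ∈ I, ∑ m ∈ I, ∏ p ∈ Q, (1 / (p : ℝ) * dvdInd p (n - m) + (1 - 2 / p)) =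
      ∑ D ∈ Q.powerset, w D * ∑ n ∈ I, ∑ m ∈ I, dvdInd (∏ p ∈ D, p) (n - m) := by
    simp only [Finset.mul_sum]
    rw [Finset.sum_comm (s := Q.powerset)]
    refine Finset.sum_congr rfl fun n _ => ?_
    rw [Finset.sum_comm (s := Q.powerset)]
    refine Finset.sum_congr rfl fun m _ => ?_
    rw [Finset.prod_add]
    refine Finset.sum_congr rfl fun D hD => ?_
    rw [Finset.prod_mul_distrib,
      prod_dvdInd D fun p hp => hQ p (Finset.mem_powerset.1 hD hp)]
    ring
  have hmain : ((∏ p ∈ Q, (1 - 1 / (p : ℝ))) * y) ^ 2 =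
      ∑ D ∈ Q.powerset, w D * ((y : ℝ) ^ 2 / (∏ p ∈ D, p : ℕ)) := by
    have : (∏ p ∈ Q, (1 - 1 / (p : ℝ))) ^ 2 =
        ∏ p ∈ Q, (1 / (p : ℝ) * (1 / p) + (1 - 2 / p)) := by
      rw [← Finset.prod_pow]
      exact Finset.prod_congr rfl fun p _ => by ring
    rw [mul_pow, this, Finset.prod_add, Finset.sum_mul]
    refine Finset.sum_congr rfl fun D _ => ?_
    simp only [w, Finset.prod_mul_distrib]
    push_cast
    simp only [one_div, Finset.prod_inv_distrib]
    ring
  have herr : (∏ p ∈ Q, (1 - 1 / (p : ℝ))) * y = ∑ D ∈ Q.powerset, w D * y := by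
    rw [← Finset.sum_mul, ← Finset.prod_add]
    congr 1
    exact Finset.prod_congr rfl fun p _ => by ring
  rw [hsum, hmain, herr, ← Finset.sum_sub_distrib]
  refine (Finset.abs_sum_le_sum_abs _ _).trans (Finset.sum_le_sum fun D hD => ?_)
  rw [← mul_sub, abs_mul, abs_of_nonneg (hw D hD)]
  refine mul_le_mul_of_nonneg_left (abs_sum_sum_dvdInd_sub_le (Finset.prod_pos fun p hp => ?_) y)
    (hw D hD)
  exact (hQ p (Finset.mem_powerset.1 hD hp)).pos

lemma prime_of_mem_primesUpTo {t : ℝ} {p : ℕ} (hp : p ∈ primesUpTo t) : p.Prime :=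
  (Finset.mem_filter.1 hp).2.1

lemma indicator_inS (t : ℝ) (b n : ℤ) :
    (if inS t b n then (1 : ℝ) else 0) = ∏ p ∈ primesUpTo t, (1 - dvdInd p (n - b)) := by
  have : ∀ p : ℕ, 1 - dvdInd p (n - b) = if ¬ (p : ℤ) ∣ n - b then (1 : ℝ) else 0 := by
    intro p
    by_cases h : (p : ℤ) ∣ n - b <;> simp [dvdInd, h]
  simp only [this, Finset.prod_ite_zero, Finset.prod_const_one, inS, mem_primesUpTo, and_imp]
  congr

lemma countS_eq_sum (t : ℝ) (b lo hi : ℤ) :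
    (countS t b lo hi : ℝ) =
      ∑ n ∈ Finset.Icc lo hi, ∏ p ∈ primesUpTo t, (1 - dvdInd p (n - b)) := by
  simp only [← indicator_inS, Finset.sum_boole, countS]

lemma PP_pos (t : ℝ) : 0 < PP t :=
  Finset.prod_pos fun _ hp => (prime_of_mem_primesUpTo hp).pos

lemma mean_countS (t : ℝ) (N : ℤ) (y : ℕ) :
    (1 / (PP t : ℝ)) * ∑ b ∈ Finset.range (PP t), (countS t (-N - (b : ℤ)) (-(y : ℤ)) (-1) : ℝ) =
      sigUpTo t * y := by
  have hP : (PP t : ℝ) ≠ 0 := by exact_mod_cast (PP_pos t).ne'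
  have key : ∀ n : ℤ, ∑ b ∈ Finset.range (PP t),
      ∏ p ∈ primesUpTo t, (1 - dvdInd p (n - (-N - (b : ℤ)))) = PP t * sigUpTo t := by
    intro n
    simp only [show ∀ b : ℤ, n - (-N - b) = n + N + b by intro b; ring]
    rw [PP, sum_range_prod_primes _ (fun p hp => prime_of_mem_primesUpTo hp)
      (fun p b => 1 - dvdInd p (n + N + b)) (fun p b => by rw [dvdInd_add_mod])]
    rw [Finset.prod_congr rfl fun p hp =>
      sum_range_one_sub_dvdInd (prime_of_mem_primesUpTo hp).pos (n + N)]
    rw [Finset.prod_mul_distrib, sigUpTo]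
    push_cast
    rfl
  simp only [countS_eq_sum]
  rw [Finset.sum_comm]
  simp only [key]
  simp
  field_simp

lemma abs_second_moment_countS_sub_le (t : ℝ) (N : ℤ) (y : ℕ) :
    |(1 / (PP t : ℝ)) *
        ∑ b ∈ Finset.range (PP t), (countS t (-N - (b : ℤ)) (-(y : ℤ)) (-1) : ℝ) ^ 2 -
      (sigUpTo t * y) ^ 2| ≤ sigUpTo t * y := by
  have hP : (PP t : ℝ) ≠ 0 := by exact_mod_cast (PP_pos t).ne'
  have key : ∀ n m : ℤ, ∑ b ∈ Finset.range (PP t),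
      (∏ p ∈ primesUpTo t, (1 - dvdInd p (n - (-N - (b : ℤ))))) *
        ∏ p ∈ primesUpTo t, (1 - dvdInd p (m - (-N - (b : ℤ)))) =
      PP t * ∏ p ∈ primesUpTo t, (1 / (p : ℝ) * dvdInd p (n - m) + (1 - 2 / p)) := by
    intro n m
    simp only [show ∀ b k : ℤ, k - (-N - b) = k + N + b by intro b k; ring,
      ← Finset.prod_mul_distrib]
    rw [PP, sum_range_prod_primes _ (fun p hp => prime_of_mem_primesUpTo hp)
      (fun p b => (1 - dvdInd p (n + N + b)) * (1 - dvdInd p (m + N + b)))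
      (fun p b => by rw [dvdInd_add_mod, dvdInd_add_mod])]
    rw [Finset.prod_congr rfl fun p hp =>
      sum_range_one_sub_dvdInd_mul (prime_of_mem_primesUpTo hp).pos (n + N) (m + N)]
    rw [Finset.prod_mul_distrib]
    push_cast
    simp only [add_sub_add_right_eq_sub]
  have hsum : (1 / (PP t : ℝ)) *
      ∑ b ∈ Finset.range (PP t), (countS t (-N - (b : ℤ)) (-(y : ℤ)) (-1) : ℝ) ^ 2 =
      ∑ n ∈ Finset.Icc (-(y : ℤ)) (-1), ∑ m ∈ Finset.Icc (-(y : ℤ)) (-1),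
        ∏ p ∈ primesUpTo t, (1 / (p : ℝ) * dvdInd p (n - m) + (1 - 2 / p)) := by
    simp only [countS_eq_sum, sq, Finset.sum_mul_sum]
    rw [Finset.sum_comm, Finset.mul_sum]
    refine Finset.sum_congr rfl fun n _ => ?_
    rw [Finset.sum_comm, Finset.mul_sum]
    refine Finset.sum_congr rfl fun m _ => ?_
    rw [key, one_div, inv_mul_cancel_left₀ hP]
  rw [hsum]
  exact abs_sum_pair_sub_le _ (fun p hp => prime_of_mem_primesUpTo hp) y

/-- A weak Mertens-type lower bound, from the fact that every prime but `2` is odd. -/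
lemma one_div_le_prod_primes_sq (k : ℕ) :
    1 / (4 * (2 * k + 1) : ℝ) ≤
      (∏ p ∈ (Finset.range (2 * k + 2)).filter Nat.Prime, (1 - 1 / (p : ℝ))) ^ 2 := by
  induction k with
  | zero =>
    rw [Finset.filter_false_of_mem]
    · norm_num
    · intro p hp h
      have := h.two_le
      have := Finset.mem_range.1 hp
      omega
  | succ k ih =>
    rcases Nat.eq_zero_or_pos k with rfl | hk
    · norm_num [Finset.prod_filter, Finset.prod_range_succ, Nat.prime_two, Nat.prime_three]
    · have hnp : ¬ (2 * k + 2).Prime := by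
        intro h
        rcases h.eq_one_or_self_of_dvd 2 ⟨k + 1, by ring⟩ with h | h <;> omega
      have hstep : (∏ p ∈ (Finset.range (2 * (k + 1) + 2)).filter Nat.Prime,
            (1 - 1 / (p : ℝ))) =
          (∏ p ∈ (Finset.range (2 * k + 2)).filter Nat.Prime, (1 - 1 / (p : ℝ))) *
            (if (2 * k + 3).Prime then (1 - 1 / ((2 * k + 3 : ℕ) : ℝ)) else 1) := by
        simp only [Finset.prod_filter]
        rw [show 2 * (k + 1) + 2 = 2 * k + 2 + 1 + 1 by ring, Finset.prod_range_succ,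
          Finset.prod_range_succ, if_neg hnp, mul_one]
      have hk' : (0 : ℝ) < k := by exact_mod_cast hk
      have hfac : (2 * k + 1 : ℝ) / (2 * k + 3) ≤
          (if (2 * k + 3).Prime then (1 - 1 / ((2 * k + 3 : ℕ) : ℝ)) else 1) ^ 2 := by
        split_ifs
        · push_cast
          rw [one_sub_div (by positivity), div_pow, div_le_div_iff₀ (by positivity) (by positivity)]
          nlinarith
        · rw [one_pow, div_le_one (by positivity)]
          linarith
      rw [hstep, mul_pow]
      refine le_trans (le_of_eq ?_) (mul_le_mul ih hfac (by positivity) (sq_nonneg _))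
      push_cast
      field_simp
      ring

lemma one_sub_one_div_nonneg (p : ℕ) : 0 ≤ 1 - 1 / (p : ℝ) := by
  rw [one_div, sub_nonneg]
  exact Nat.cast_inv_le_one p

lemma sigUpTo_nonneg (t : ℝ) : 0 ≤ sigUpTo t :=
  Finset.prod_nonneg fun p _ => one_sub_one_div_nonneg p

lemma one_div_le_sigUpTo_sq {t : ℝ} {y : ℕ} (hy : 1 ≤ y) (h : t ≤ y) :
    1 / (8 * y : ℝ) ≤ sigUpTo t ^ 2 := by
  have hy' : (1 : ℝ) ≤ y := by exact_mod_cast hy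
  set k := y / 2
  have hk : (2 * k + 1 : ℝ) ≤ 2 * y := by
    have : 2 * k + 1 ≤ 2 * y := by omega
    exact_mod_cast this
  have hsub : primesUpTo t ⊆ (Finset.range (2 * k + 2)).filter Nat.Prime := by
    intro p hp
    obtain ⟨hp1, hp2⟩ := mem_primesUpTo.1 hp
    have : p ≤ y := by exact_mod_cast hp2.trans h
    simp only [Finset.mem_filter, Finset.mem_range]
    exact ⟨by omega, hp1⟩
  have hle : ∏ p ∈ (Finset.range (2 * k + 2)).filter Nat.Prime, (1 - 1 / (p : ℝ)) ≤
      sigUpTo t := by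
    rw [sigUpTo, ← Finset.prod_sdiff hsub]
    refine mul_le_of_le_one_left (sigUpTo_nonneg t)
      (Finset.prod_le_one (fun p _ => one_sub_one_div_nonneg p) fun p _ => ?_)
    simp
  calc 1 / (8 * y : ℝ) ≤ 1 / (4 * (2 * k + 1)) := by
        apply one_div_le_one_div_of_le (by positivity)
        linarith
    _ ≤ _ := one_div_le_prod_primes_sq k
    _ ≤ _ :=
        pow_le_pow_left₀ (Finset.prod_nonneg fun p _ => one_sub_one_div_nonneg p) hle 2

lemma log_le_mul_sigUpTo {t : ℝ} {y : ℕ} (hy : 1 ≤ y) (h : t ≤ y) :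
    Real.log y ≤ 8 * (sigUpTo t * y) := by
  have hy' : (1 : ℝ) ≤ y := by exact_mod_cast hy
  have hlog : Real.log y ≤ 2 * √y := by
    have h1 := Real.log_sqrt (x := (y : ℝ)) (by linarith)
    have h2 := Real.log_le_sub_one_of_pos (x := √(y : ℝ)) (by positivity)
    linarith
  have hsq : √(y : ℝ) ≤ 4 * (sigUpTo t * y) := by
    rw [Real.sqrt_le_left (by have := sigUpTo_nonneg t; positivity)]
    have := one_div_le_sigUpTo_sq hy h
    rw [div_le_iff₀ (by positivity)] at this
    nlinarith
  linarith

theorem stmt2 (δ M : ℝ) (K : ℕ) (ξ : ℝ)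
    (hδ0 : 0 < δ) (hδ1 : δ < 1/2) (hK : 2 ≤ K) (hξ : 1 < ξ) :
    (∃ x₀ : ℝ, ∀ x ≥ x₀, ∀ N : ℤ,
      EE δ x (fun b => (countS (zz δ x) (-N - b) (-(yy δ x : ℤ)) (-1) : ℝ)) =
        sigUpTo (zz δ x) * (yy δ x)) ∧
    (∃ C : ℝ, 0 < C ∧ ∃ x₀ : ℝ, ∀ x ≥ x₀, ∀ N : ℤ,
      |EE δ x (fun b => ((countS (zz δ x) (-N - b) (-(yy δ x : ℤ)) (-1) : ℝ)) ^ 2) -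
          (sigUpTo (zz δ x) * (yy δ x)) ^ 2| ≤
        C * (sigUpTo (zz δ x) * (yy δ x)) ^ 2 / Real.log (yy δ x)) := by
  refine ⟨⟨0, fun x _ N => mean_countS (zz δ x) N (yy δ x)⟩, 8, by norm_num, ?_⟩
  obtain ⟨x₀, hx₀⟩ := Filter.eventually_atTop.1
    ((eventually_zz_le_yy δ).and (eventually_two_le_yy hδ0))
  refine ⟨x₀, fun x hx N => ?_⟩
  obtain ⟨hz, hy⟩ := hx₀ x hx
  refine (abs_second_moment_countS_sub_le (zz δ x) N (yy δ x)).trans ?_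
  have hlog : 0 < Real.log (yy δ x) := Real.log_pos (by exact_mod_cast hy)
  have hσ : 0 ≤ sigUpTo (zz δ x) * yy δ x := mul_nonneg (sigUpTo_nonneg _) (Nat.cast_nonneg _)
  rw [le_div_iff₀ hlog]
  nlinarith [mul_le_mul_of_nonneg_left (log_le_mul_sigUpTo (one_le_two.trans hy) hz) hσ]
end

section
/- Assume M ≥ 2. There exist C > 0 and x₀ (depending only on δ, M, K, ξ) such that for all x ≥ x₀, every H ∈ 𝔥₁ and every j ∈ {1, 2}: |E[∑_{q ∈ Q_H} (∑_{−Ky < n ≤ y} λ_b(H; q, n))^j] − ((K+1)y)^j·#Q_H| ≤ C·((K+1)y)^j·#Q_H / H^{M−2}. -/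
open scoped Classical

lemma sum_range_mul_of_coprime_s3 {P Q : ℕ} (hP : 0 < P) (hQ : 0 < Q) (h : P.Coprime Q)
    (F : ℤ → ℤ → ℝ) (h1 : ∀ a a' b, a ≡ a' [ZMOD P] → F a b = F a' b)
    (h2 : ∀ a b b', b ≡ b' [ZMOD Q] → F a b = F a b') :
    ∑ b ∈ Finset.range (P * Q), F b b = ∑ a ∈ Finset.range P, ∑ b ∈ Finset.range Q, F a b := by
  rw [← Finset.sum_product']
  refine Finset.sum_nbij' (fun b => (b % P, b % Q))
    (fun c => (Nat.chineseRemainder h c.1 c.2 : ℕ)) ?_ ?_ ?_ ?_ ?_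
  · intro b _
    simp [Nat.mod_lt _ hP, Nat.mod_lt _ hQ]
  · rintro ⟨a, c⟩ _
    simpa using Nat.chineseRemainder_lt_mul h a c hP.ne' hQ.ne'
  · intro b hb
    have hb : b < P * Q := by simpa using hb
    have := Nat.chineseRemainder_modEq_unique h (a := b % P) (b := b % Q) (z := b)
      (Nat.mod_modEq _ _).symm (Nat.mod_modEq _ _).symm
    exact (Nat.ModEq.eq_of_lt_of_lt this hb (Nat.chineseRemainder_lt_mul h _ _ hP.ne' hQ.ne')).symm
  · rintro ⟨a, c⟩ hac
    simp only [Finset.mem_product, Finset.mem_range] at hac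
    have := (Nat.chineseRemainder h a c).2
    ext
    · exact Eq.trans this.1 (Nat.mod_eq_of_lt hac.1)
    · exact Eq.trans this.2 (Nat.mod_eq_of_lt hac.2)
  · intro b _
    simp only
    rw [h1 b ((b % P : ℕ) : ℤ) _ ?_, h2 _ b ((b % Q : ℕ) : ℤ) ?_]
    · exact Int.natCast_modEq_iff.2 (Nat.mod_modEq _ _).symm
    · exact Int.natCast_modEq_iff.2 (Nat.mod_modEq _ _).symm

lemma sum_range_prod_primes_s3 (s : Finset ℕ) (hs : ∀ p ∈ s, p.Prime) (g : ℕ → ℤ → ℝ)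
    (hg : ∀ p ∈ s, ∀ a a', a ≡ a' [ZMOD p] → g p a = g p a') :
    ∑ b ∈ Finset.range (∏ p ∈ s, p), ∏ p ∈ s, g p b =
      ∏ p ∈ s, ∑ b ∈ Finset.range p, g p b := by
  induction s using Finset.induction_on with
  | empty => simp
  | insert p s hp ih =>
    have hs' : ∀ r ∈ s, r.Prime := fun r hr => hs r (Finset.mem_insert_of_mem hr)
    have hg' : ∀ r ∈ s, ∀ a a', a ≡ a' [ZMOD r] → g r a = g r a' :=
      fun r hr => hg r (Finset.mem_insert_of_mem hr)
    have hpp := hs p (Finset.mem_insert_self _ _)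
    simp only [Finset.prod_insert hp]
    rw [sum_range_mul_of_coprime_s3 hpp.pos (Finset.prod_pos fun r hr => (hs' r hr).pos)
      (Nat.Coprime.prod_right fun r hr => (Nat.coprime_primes hpp (hs' r hr)).2
        (by rintro rfl; exact hp hr)) (fun a b => g p a * ∏ r ∈ s, g r b), ← ih hs' hg',
        Finset.sum_mul_sum]
    · intro a a' b hab
      rw [hg p (Finset.mem_insert_self _ _) a a' hab]
    · intro a b b' hbb
      congr 1
      refine Finset.prod_congr rfl fun r hr => hg' r hr _ _ ?_
      exact hbb.of_dvd (Int.natCast_dvd_natCast.2 (Finset.dvd_prod_of_mem _ hr))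

/-- The number of residue classes modulo `p` occupied by `T`. -/
noncomputable def resCount (p : ℕ) (T : Finset ℤ) : ℕ := (T.image fun m => m % (p : ℤ)).card

lemma resCount_le_card (p : ℕ) (T : Finset ℤ) : resCount p T ≤ T.card := Finset.card_image_le

lemma sum_avoid_eq {p : ℕ} (hp : p.Prime) (T : Finset ℤ) :
    ∑ b ∈ Finset.range p, (if ∀ m ∈ T, ¬ ((p : ℤ) ∣ m - (b : ℤ)) then (1 : ℝ) else 0) =
      p - resCount p T := by
  have hp0 : (0 : ℤ) < p := by exact_mod_cast hp.pos
  have hc : ((Finset.range p).filter fun b : ℕ => ¬ ∀ m ∈ T, ¬ ((p : ℤ) ∣ m - (b : ℤ))).card =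
      resCount p T := by
    refine Finset.card_bij (fun b _ => (b : ℤ)) ?_ ?_ ?_
    · intro b hb
      simp only [Finset.mem_filter, Finset.mem_range, not_forall, not_not] at hb
      obtain ⟨hbp, m, hm, hd⟩ := hb
      refine Finset.mem_image.2 ⟨m, hm, ?_⟩
      have h := Int.emod_eq_emod_iff_emod_sub_eq_zero.2 (Int.emod_eq_zero_of_dvd hd)
      rwa [Int.emod_eq_of_lt (Int.natCast_nonneg b) (by exact_mod_cast hbp)] at h
    · intro a _ b _ h
      exact_mod_cast h
    · intro c hc
      obtain ⟨m, hm, rfl⟩ := Finset.mem_image.1 hc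
      have h0 := Int.emod_nonneg m hp0.ne'
      have h1 := Int.emod_lt_of_pos m hp0
      refine ⟨(m % p).toNat, ?_, Int.toNat_of_nonneg h0⟩
      simp only [Finset.mem_filter, Finset.mem_range, not_forall, not_not]
      refine ⟨by omega, m, hm, ?_⟩
      rw [Int.toNat_of_nonneg h0]
      exact Int.dvd_self_sub_emod
  have hsum := Finset.card_filter_add_card_filter_not (s := Finset.range p)
    (fun b : ℕ => ∀ m ∈ T, ¬ ((p : ℤ) ∣ m - (b : ℤ)))
  rw [hc, Finset.card_range] at hsum
  rw [Finset.sum_boole, eq_sub_iff_add_eq]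
  exact_mod_cast hsum

lemma mem_primesBetween {w t : ℝ} {p : ℕ} :
    p ∈ primesBetween w t ↔ p.Prime ∧ w < (p : ℝ) ∧ (p : ℝ) ≤ t := by
  simp only [primesBetween, Finset.mem_filter, Finset.mem_range, and_iff_right_iff_imp]
  rintro ⟨_, _, h⟩
  exact Nat.lt_succ_of_le (Nat.le_floor h)

/-- The product of the primes in `(w, t]`. -/
noncomputable def PPBetween (w t : ℝ) : ℕ := ∏ p ∈ primesBetween w t, p

lemma PPBetween_pos (w t : ℝ) : 0 < PPBetween w t :=
  Finset.prod_pos fun _ hp => (mem_primesBetween.1 hp).1.pos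

lemma PP_eq_mul {w t : ℝ} (h : w ≤ t) : PP t = PP w * PPBetween w t := by
  rw [PP, PP, PPBetween, ← Finset.prod_union]
  · congr 1
    ext p
    simp only [Finset.mem_union, mem_primesUpTo, mem_primesBetween]
    constructor
    · rintro ⟨h1, h2⟩
      rcases le_or_gt (p : ℝ) w with h3 | h3
      · exact Or.inl ⟨h1, h3⟩
      · exact Or.inr ⟨h1, h3, h2⟩
    · rintro (⟨h1, h2⟩ | ⟨h1, h2, h3⟩)
      · exact ⟨h1, h2.trans h⟩
      · exact ⟨h1, h3⟩
  · refine Finset.disjoint_left.2 fun p h1 h2 => ?_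
    exact absurd (mem_primesUpTo.1 h1).2 (not_le.2 (mem_primesBetween.1 h2).2.1)

lemma PP_coprime_PPBetween (w t : ℝ) : (PP w).Coprime (PPBetween w t) := by
  refine Nat.Coprime.prod_left fun p hp => Nat.Coprime.prod_right fun r hr => ?_
  rw [mem_primesUpTo] at hp
  rw [mem_primesBetween] at hr
  refine (Nat.coprime_primes hp.1 hr.1).2 ?_
  rintro rfl
  exact absurd hp.2 (not_le.2 hr.2.1)

lemma dvd_sub_congr {p P : ℕ} (hpP : p ∣ P) {b b' : ℤ} (h : b ≡ b' [ZMOD P]) (n : ℤ) :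
    (p : ℤ) ∣ n - b ↔ (p : ℤ) ∣ n - b' := by
  have h' : b ≡ b' [ZMOD p] := h.of_dvd (Int.natCast_dvd_natCast.2 hpP)
  have hd := h'.dvd
  rw [show n - b = (n - b') + (b' - b) by ring]
  exact dvd_add_left hd

lemma inS_congr {w : ℝ} {b b' : ℤ} (h : b ≡ b' [ZMOD PP w]) (n : ℤ) :
    inS w b n ↔ inS w b' n := by
  refine forall_congr' fun p => forall_congr' fun hp => forall_congr' fun hpw => ?_
  rw [dvd_sub_congr (Finset.dvd_prod_of_mem _ (mem_primesUpTo.2 ⟨hp, hpw⟩)) h]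

lemma inSBetween_congr {w t : ℝ} {b b' : ℤ} (h : b ≡ b' [ZMOD PPBetween w t]) (n : ℤ) :
    inSBetween w t b n ↔ inSBetween w t b' n := by
  refine forall_congr' fun p => forall_congr' fun hp => forall_congr' fun hpw =>
    forall_congr' fun hpt => ?_
  rw [dvd_sub_congr (Finset.dvd_prod_of_mem _ (mem_primesBetween.2 ⟨hp, hpw, hpt⟩)) h]

lemma sum_avoid_between (w t : ℝ) (T : Finset ℤ) :
    ∑ b ∈ Finset.range (PPBetween w t),
      (if ∀ m ∈ T, inSBetween w t (b : ℤ) m then (1 : ℝ) else 0) =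
      PPBetween w t * ∏ p ∈ primesBetween w t, (1 - (resCount p T : ℝ) / p) := by
  have hind : ∀ b : ℤ, (if ∀ m ∈ T, inSBetween w t b m then (1 : ℝ) else 0) =
      ∏ p ∈ primesBetween w t, if ∀ m ∈ T, ¬ ((p : ℤ) ∣ m - b) then (1 : ℝ) else 0 := by
    intro b
    rw [Finset.prod_ite_zero]
    simp only [Finset.prod_const_one]
    refine if_congr ?_ rfl rfl
    constructor
    · intro h p hp m hm
      rw [mem_primesBetween] at hp
      exact h m hm p hp.1 hp.2.1 hp.2.2
    · intro h m hm p hp h1 h2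
      exact h p (mem_primesBetween.2 ⟨hp, h1, h2⟩) m hm
  simp only [hind]
  rw [PPBetween, sum_range_prod_primes_s3 _ (fun p hp => (mem_primesBetween.1 hp).1)
    (fun p b => if ∀ m ∈ T, ¬ ((p : ℤ) ∣ m - b) then (1 : ℝ) else 0)]
  · rw [Nat.cast_prod, ← Finset.prod_mul_distrib]
    refine Finset.prod_congr rfl fun p hp => ?_
    have hp := (mem_primesBetween.1 hp).1
    have hp0 : (p : ℝ) ≠ 0 := by exact_mod_cast hp.ne_zero
    rw [sum_avoid_eq hp]
    field_simp
  · intro p _ a a' h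
    simp only [dvd_sub_congr dvd_rfl h]

lemma sum_inv_sq_le {w : ℝ} (hw : 0 < w) (s : Finset ℕ) (hs : ∀ p ∈ s, w < (p : ℝ)) :
    ∑ p ∈ s, ((p : ℝ) ^ 2)⁻¹ ≤ 2 / w := by
  calc ∑ p ∈ s, ((p : ℝ) ^ 2)⁻¹
      ≤ ∑ p ∈ Finset.Ioo ⌊w⌋₊ (s.sup id + 1), ((p : ℝ) ^ 2)⁻¹ := by
        refine Finset.sum_le_sum_of_subset_of_nonneg (fun p hp => ?_) fun _ _ _ => by positivity
        rw [Finset.mem_Ioo]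
        exact ⟨(Nat.floor_lt hw.le).2 (hs p hp), Nat.lt_succ_of_le (Finset.le_sup (f := id) hp)⟩
    _ ≤ 2 / ((⌊w⌋₊ : ℝ) + 1) := sum_Ioo_inv_sq_le _ _
    _ ≤ 2 / w := by
        gcongr
        exact (Nat.lt_floor_add_one w).le

lemma exp_neg_le_one_sub {t : ℝ} (h0 : 0 ≤ t) (h1 : t ≤ 1 / 2) :
    Real.exp (-t - t ^ 2) ≤ 1 - t := by
  have h2 : (0 : ℝ) < 1 - t := by linarith
  have h3 : (1 - t)⁻¹ ≤ 1 + (t + t ^ 2) + (t + t ^ 2) ^ 2 / 2 := by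
    rw [inv_le_iff_one_le_mul₀ h2]
    have : 0 ≤ t ^ 2 * (1 / 2 - t) := mul_nonneg (sq_nonneg _) (by linarith)
    nlinarith [mul_nonneg (sq_nonneg t) h0, mul_nonneg this h0,
      mul_nonneg (mul_nonneg this h0) h0]
  have h4 := Real.quadratic_le_exp_of_nonneg (x := t + t ^ 2) (by positivity)
  have h5 : (1 - t)⁻¹ ≤ Real.exp (t + t ^ 2) := h3.trans h4
  rw [show -t - t ^ 2 = -(t + t ^ 2) by ring, Real.exp_neg]
  exact inv_le_of_inv_le₀ h2 h5

lemma prod_one_sub_lower {w : ℝ} (hw : 0 < w) (s : Finset ℕ) (hs : ∀ p ∈ s, w < (p : ℝ)) (R : ℕ)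
    (hR : 2 * (R : ℝ) ≤ w) (ν : ℕ → ℕ) (hν : ∀ p ∈ s, ν p ≤ R) :
    (∏ p ∈ s, (1 - 1 / (p : ℝ))) ^ R * (1 - 2 * (R : ℝ) ^ 2 / w) ≤
      ∏ p ∈ s, (1 - (ν p : ℝ) / p) := by
  have hp0 : ∀ p ∈ s, (0 : ℝ) < p := fun p hp => hw.trans (hs p hp)
  have hp1 : ∀ p ∈ s, 0 ≤ 1 - 1 / (p : ℝ) := fun p hp => by
    have h1 : (1 : ℝ) ≤ p := by exact_mod_cast Nat.one_le_iff_ne_zero.2 (by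
      rintro rfl; simpa using hp0 _ hp)
    rw [sub_nonneg]
    exact div_le_one_of_le₀ h1 (hp0 p hp).le
  calc (∏ p ∈ s, (1 - 1 / (p : ℝ))) ^ R * (1 - 2 * (R : ℝ) ^ 2 / w)
      ≤ (∏ p ∈ s, (1 - 1 / (p : ℝ))) ^ R * Real.exp (-((R : ℝ) ^ 2 * ∑ p ∈ s, ((p : ℝ) ^ 2)⁻¹)) := by
        refine mul_le_mul_of_nonneg_left ?_ (pow_nonneg (Finset.prod_nonneg hp1) _)
        refine le_trans ?_ (Real.one_sub_le_exp_neg _)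
        have := mul_le_mul_of_nonneg_left (sum_inv_sq_le hw s hs) (sq_nonneg (R : ℝ))
        have h2 : (R : ℝ) ^ 2 * (2 / w) = 2 * (R : ℝ) ^ 2 / w := by ring
        linarith
    _ = ∏ p ∈ s, ((1 - 1 / (p : ℝ)) ^ R * Real.exp (-((R : ℝ) ^ 2 * ((p : ℝ) ^ 2)⁻¹))) := by
        rw [Finset.prod_mul_distrib, Finset.prod_pow, Finset.mul_sum, ← Finset.sum_neg_distrib,
          Real.exp_sum]
    _ ≤ ∏ p ∈ s, (1 - (ν p : ℝ) / p) := by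
        refine Finset.prod_le_prod (fun p hp => ?_) fun p hp => ?_
        · have := hp1 p hp
          positivity
        · have hpos := hp0 p hp
          have h1 : (1 - 1 / (p : ℝ)) ^ R ≤ Real.exp (-((R : ℝ) / p)) := by
            calc (1 - 1 / (p : ℝ)) ^ R ≤ (Real.exp (-(1 / (p : ℝ)))) ^ R :=
                  pow_le_pow_left₀ (hp1 p hp) (Real.one_sub_le_exp_neg _) _
              _ = _ := by
                  rw [← Real.exp_nat_mul]
                  congr 1
                  ring
          have h2 : Real.exp (-((R : ℝ) / p) - ((R : ℝ) / p) ^ 2) ≤ 1 - (R : ℝ) / p := by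
            refine exp_neg_le_one_sub (by positivity) ?_
            rw [div_le_iff₀ hpos]
            linarith [hs p hp]
          calc _ ≤ Real.exp (-((R : ℝ) / p)) * Real.exp (-((R : ℝ) ^ 2 * ((p : ℝ) ^ 2)⁻¹)) := by
                gcongr
            _ = Real.exp (-((R : ℝ) / p) - ((R : ℝ) / p) ^ 2) := by
                rw [← Real.exp_add]
                congr 1
                rw [div_pow]
                ring
            _ ≤ 1 - (R : ℝ) / p := h2
            _ ≤ _ := by
                have : (ν p : ℝ) ≤ R := by exact_mod_cast hν p hp
                gcongr

lemma prod_one_sub_upper {w : ℝ} (hw : 0 < w) (s : Finset ℕ) (hs : ∀ p ∈ s, w < (p : ℝ)) (R : ℕ)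
    (hR : 2 * (R : ℝ) ≤ w) (ν : ℕ → ℕ) (hν : ∀ p ∈ s, ν p ≤ R) (c : ℕ → ℝ)
    (hc0 : ∀ p ∈ s, 0 ≤ c p)
    (hc : ∀ p ∈ s, (R : ℝ) ≤ ν p + c p) :
    ∏ p ∈ s, (1 - (ν p : ℝ) / p) ≤
      (∏ p ∈ s, (1 - 1 / (p : ℝ))) ^ R * ∏ p ∈ s, (1 + 2 * c p / p) := by
  rw [← Finset.prod_pow, ← Finset.prod_mul_distrib]
  refine Finset.prod_le_prod (fun p hp => ?_) fun p hp => ?_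
  · have hpos : (0 : ℝ) < p := hw.trans (hs p hp)
    have : (ν p : ℝ) ≤ R := by exact_mod_cast hν p hp
    rw [sub_nonneg, div_le_one hpos]
    linarith [hs p hp, Nat.cast_nonneg (α := ℝ) (ν p)]
  · have hpos : (0 : ℝ) < p := hw.trans (hs p hp)
    have h1p : (1 : ℝ) ≤ p := by exact_mod_cast (Nat.one_le_iff_ne_zero.2 (by
      rintro rfl; simp at hpos))
    have hB : 1 - (R : ℝ) / p ≤ (1 - 1 / (p : ℝ)) ^ R := by
      have h2 : (1 : ℝ) / p ≤ 1 := div_le_one_of_le₀ h1p hpos.le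
      have := one_add_mul_le_pow (a := -(1 / (p : ℝ))) (by linarith) R
      calc 1 - (R : ℝ) / p = 1 + R * -(1 / (p : ℝ)) := by ring
        _ ≤ _ := this
        _ = _ := by rw [← sub_eq_add_neg]
    have hhalf : (R : ℝ) / p ≤ 1 / 2 := by
      rw [div_le_iff₀ hpos]
      linarith [hs p hp]
    have hcp : 0 ≤ c p / p := div_nonneg (hc0 p hp) hpos.le
    have hν' : (R : ℝ) / p ≤ ν p / p + c p / p := by
      rw [← add_div]
      exact div_le_div_of_nonneg_right (hc p hp) hpos.le
    have : (1 / 2 : ℝ) ≤ (1 - 1 / (p : ℝ)) ^ R := by linarith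
    calc 1 - (ν p : ℝ) / p ≤ (1 - 1 / (p : ℝ)) ^ R + c p / p := by linarith
      _ ≤ (1 - 1 / (p : ℝ)) ^ R + (1 - 1 / (p : ℝ)) ^ R * (2 * (c p / p)) := by nlinarith
      _ = _ := by ring

lemma one_le_prod_real {ι : Type*} {s : Finset ι} {f : ι → ℝ} (h : ∀ i ∈ s, 1 ≤ f i) :
    1 ≤ ∏ i ∈ s, f i := by
  simpa using Finset.prod_le_prod (f := fun _ => (1 : ℝ)) (fun _ _ => zero_le_one) h

/-- The product of `1 + B / p` over the primes `p ∈ s` dividing `m`. -/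
noncomputable def divProd (s : Finset ℕ) (B : ℝ) (m : ℤ) : ℝ :=
  ∏ p ∈ s, (1 + if (p : ℤ) ∣ m then B / p else 0)

lemma one_le_divProd (s : Finset ℕ) {B : ℝ} (hB : 0 ≤ B) (m : ℤ) : 1 ≤ divProd s B m := by
  refine one_le_prod_real fun p _ => ?_
  split_ifs
  · have : 0 ≤ B / (p : ℝ) := by positivity
    linarith
  · simp

lemma divProd_neg (s : Finset ℕ) (B : ℝ) (m : ℤ) : divProd s B (-m) = divProd s B m := by
  simp [divProd]

lemma prod_one_add_inv_sq_le {w : ℝ} (hw : 0 < w) (s : Finset ℕ) (hs : ∀ p ∈ s, w < (p : ℝ))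
    {B : ℝ} (hB : 0 ≤ B) : ∏ p ∈ s, (1 + B / (p : ℝ) ^ 2) ≤ Real.exp (2 * B / w) := by
  calc ∏ p ∈ s, (1 + B / (p : ℝ) ^ 2) ≤ ∏ p ∈ s, Real.exp (B * ((p : ℝ) ^ 2)⁻¹) := by
        refine Finset.prod_le_prod (fun p _ => by positivity) fun p _ => ?_
        rw [div_eq_mul_inv, add_comm]
        exact Real.add_one_le_exp _
    _ = Real.exp (B * ∑ p ∈ s, ((p : ℝ) ^ 2)⁻¹) := by rw [Finset.mul_sum, Real.exp_sum]
    _ ≤ _ := by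
        refine Real.exp_le_exp.2 ?_
        calc _ ≤ B * (2 / w) := mul_le_mul_of_nonneg_left (sum_inv_sq_le hw s hs) hB
          _ = _ := by ring

lemma sum_divProd_le (s : Finset ℕ) (hs : ∀ p ∈ s, p.Prime) {B : ℝ} (hB : 0 ≤ B) (X : ℕ) :
    ∑ m ∈ Finset.Ioc 0 X, divProd s B (m : ℤ) ≤ X * ∏ p ∈ s, (1 + B / (p : ℝ) ^ 2) := by
  simp only [divProd, Finset.prod_one_add]
  rw [Finset.sum_comm, Finset.mul_sum]
  refine Finset.sum_le_sum fun A hA => ?_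
  have hA : A ⊆ s := Finset.mem_powerset.1 hA
  have hterm : ∀ m : ℕ, (∏ p ∈ A, if (p : ℤ) ∣ (m : ℤ) then B / (p : ℝ) else 0) =
      if (∏ p ∈ A, p) ∣ m then ∏ p ∈ A, B / (p : ℝ) else 0 := by
    intro m
    rw [Finset.prod_ite_zero]
    refine if_congr ?_ rfl rfl
    constructor
    · intro h
      exact Finset.prod_primes_dvd m (fun p hp => (hs p (hA hp)).prime)
        fun p hp => Int.natCast_dvd_natCast.1 (h p hp)
    · intro h p hp
      exact Int.natCast_dvd_natCast.2 ((Finset.dvd_prod_of_mem _ hp).trans h)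
  simp only [hterm]
  rw [← Finset.sum_filter, Finset.sum_const, nsmul_eq_mul, Nat.Ioc_filter_dvd_card_eq_div]
  have hprod : ∏ p ∈ A, B / (p : ℝ) ^ 2 = (∏ p ∈ A, B / (p : ℝ)) / ((∏ p ∈ A, p : ℕ) : ℝ) := by
    rw [Nat.cast_prod, ← Finset.prod_div_distrib]
    refine Finset.prod_congr rfl fun p _ => ?_
    rw [div_div, sq]
  rw [hprod]
  have h1 : ((X / ∏ p ∈ A, p : ℕ) : ℝ) ≤ X / ((∏ p ∈ A, p : ℕ) : ℝ) := Nat.cast_div_le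
  have h2 : 0 ≤ ∏ p ∈ A, B / (p : ℝ) := Finset.prod_nonneg fun p _ => by positivity
  calc _ ≤ X / ((∏ p ∈ A, p : ℕ) : ℝ) * ∏ p ∈ A, B / (p : ℝ) :=
        mul_le_mul_of_nonneg_right h1 h2
    _ = _ := by ring

lemma sum_divProd_sub_one_le {w : ℝ} (hw : 0 < w) (s : Finset ℕ)
    (hs : ∀ p ∈ s, p.Prime ∧ w < (p : ℝ)) {B : ℝ} (hB : 0 ≤ B) (X : ℕ) (J : Finset ℤ)
    (hJ : ∀ m ∈ J, m ≠ 0 ∧ |m| ≤ X) :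
    ∑ m ∈ J, (divProd s B m - 1) ≤ 2 * X * (Real.exp (2 * B / w) - 1) := by
  have hpos : ∑ m ∈ Finset.Ioc 0 X, (divProd s B (m : ℤ) - 1) ≤
      X * (Real.exp (2 * B / w) - 1) := by
    rw [Finset.sum_sub_distrib]
    have h1 := sum_divProd_le s (fun p hp => (hs p hp).1) hB X
    have h2 := mul_le_mul_of_nonneg_left
      (prod_one_add_inv_sq_le hw s (fun p hp => (hs p hp).2) hB) (Nat.cast_nonneg (α := ℝ) X)
    simp only [Finset.sum_const, Nat.card_Ioc, tsub_zero, nsmul_eq_mul, mul_one]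
    linarith
  have hnn : ∀ m : ℤ, 0 ≤ divProd s B m - 1 := fun m => sub_nonneg.2 (one_le_divProd s hB m)
  have hsub : J ⊆ (Finset.Ioc 0 X).image (fun m : ℕ => (m : ℤ)) ∪
      (Finset.Ioc 0 X).image (fun m : ℕ => -(m : ℤ)) := by
    intro m hm
    obtain ⟨h0, h1⟩ := hJ m hm
    rw [Finset.mem_union]
    simp only [Finset.mem_image, Finset.mem_Ioc]
    rw [abs_le] at h1
    rcases lt_or_gt_of_ne h0 with h | h
    · exact Or.inr ⟨m.natAbs, by omega, by omega⟩
    · exact Or.inl ⟨m.natAbs, by omega, by omega⟩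
  calc ∑ m ∈ J, (divProd s B m - 1)
      ≤ ∑ m ∈ (Finset.Ioc 0 X).image (fun m : ℕ => (m : ℤ)) ∪
        (Finset.Ioc 0 X).image (fun m : ℕ => -(m : ℤ)), (divProd s B m - 1) :=
        Finset.sum_le_sum_of_subset_of_nonneg hsub fun m _ _ => hnn m
    _ ≤ ∑ m ∈ (Finset.Ioc 0 X).image (fun m : ℕ => (m : ℤ)), (divProd s B m - 1) +
        ∑ m ∈ (Finset.Ioc 0 X).image (fun m : ℕ => -(m : ℤ)), (divProd s B m - 1) := by
        rw [← Finset.sum_union_inter]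
        exact le_add_of_nonneg_right (Finset.sum_nonneg fun m _ => hnn m)
    _ = ∑ m ∈ Finset.Ioc 0 X, (divProd s B (m : ℤ) - 1) +
        ∑ m ∈ Finset.Ioc 0 X, (divProd s B (m : ℤ) - 1) := by
        rw [Finset.sum_image (by intro a _ b _ h; simpa using h),
          Finset.sum_image (by intro a _ b _ h; simpa using h)]
        simp only [divProd_neg]
    _ ≤ _ := by linarith

lemma prod_le_avg_pow {ι : Type*} (s : Finset ι) (hs : s.Nonempty) (a : ι → ℝ)
    (ha : ∀ i ∈ s, 0 ≤ a i) :
    ∏ i ∈ s, a i ≤ (∑ i ∈ s, a i ^ s.card) / s.card := by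
  have hc : (s.card : ℝ) ≠ 0 := by exact_mod_cast hs.card_pos.ne'
  have h := Real.geom_mean_le_arith_mean_weighted s (fun _ => (s.card : ℝ)⁻¹)
    (fun i => a i ^ s.card) (fun _ _ => by positivity) (by simp [hc])
    (fun i hi => pow_nonneg (ha i hi) _)
  rw [← Finset.mul_sum, inv_mul_eq_div] at h
  refine le_trans (le_of_eq ?_) h
  refine Finset.prod_congr rfl fun i hi => ?_
  rw [Real.pow_rpow_inv_natCast (ha i hi) hs.card_pos.ne']

lemma exp_le_one_add_mul_exp {t c : ℝ} (h0 : 0 ≤ t) (h1 : t ≤ c) :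
    Real.exp t ≤ 1 + t * Real.exp c := by
  have h2 := Real.one_sub_le_exp_neg t
  have h3 : Real.exp (-t) * Real.exp t = 1 := by rw [← Real.exp_add]; simp
  have h4 := mul_le_mul_of_nonneg_right h2 (Real.exp_pos t).le
  have h5 := mul_le_mul_of_nonneg_left (Real.exp_le_exp.2 h1) h0
  nlinarith

lemma one_add_pow_le {p L : ℕ} {c w : ℝ} (hw : 0 < w) (hp : w < (p : ℝ))
    (hL : 6 * (L : ℝ) ^ 2 ≤ c * w) :
    (1 + 2 * (L : ℝ) / p) ^ (2 * L + 1) ≤ 1 + 6 * (L : ℝ) ^ 2 * Real.exp c / p := by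
  have hpos : (0 : ℝ) < p := hw.trans hp
  have hc : 0 ≤ c := by
    by_contra h
    push Not at h
    nlinarith [sq_nonneg (L : ℝ)]
  have hLL : (L : ℝ) ≤ (L : ℝ) ^ 2 := by
    exact_mod_cast Nat.le_self_pow two_ne_zero L
  have h1 : ((2 * L + 1 : ℕ) : ℝ) * (2 * (L : ℝ) / p) ≤ 6 * (L : ℝ) ^ 2 / p := by
    rw [← mul_div_assoc]
    refine div_le_div_of_nonneg_right ?_ hpos.le
    push_cast
    nlinarith
  have h2 : 6 * (L : ℝ) ^ 2 / p ≤ c := by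
    rw [div_le_iff₀ hpos]
    nlinarith
  calc (1 + 2 * (L : ℝ) / p) ^ (2 * L + 1)
      ≤ (Real.exp (2 * (L : ℝ) / p)) ^ (2 * L + 1) := by
        refine pow_le_pow_left₀ (by positivity) ?_ _
        rw [add_comm]
        exact Real.add_one_le_exp _
    _ = Real.exp (((2 * L + 1 : ℕ) : ℝ) * (2 * (L : ℝ) / p)) := by rw [← Real.exp_nat_mul]
    _ ≤ Real.exp (6 * (L : ℝ) ^ 2 / p) := Real.exp_le_exp.2 h1
    _ ≤ 1 + 6 * (L : ℝ) ^ 2 / p * Real.exp c := exp_le_one_add_mul_exp (by positivity) h2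
    _ = _ := by ring

/-- A product over the primes dividing one of the integers `d + q k`, `|k| ≤ L`, is bounded by the
average over `k` of products over the primes dividing `d + q k`. -/
lemma prod_collision_le {w c : ℝ} (hw : 0 < w) (s : Finset ℕ) (hs : ∀ p ∈ s, w < (p : ℝ)) (L : ℕ)
    (hL : 6 * (L : ℝ) ^ 2 ≤ c * w) (d : ℤ) (q : ℕ) :
    ∏ p ∈ s, (1 + 2 * (if ∃ k ∈ Finset.Icc (-(L : ℤ)) L, (p : ℤ) ∣ d + q * k
        then (L : ℝ) else 0) / p) ≤
      (∑ k ∈ Finset.Icc (-(L : ℤ)) L,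
        divProd s (6 * (L : ℝ) ^ 2 * Real.exp c) (d + q * k)) / (2 * L + 1 : ℕ) := by
  have hcard : (Finset.Icc (-(L : ℤ)) L).card = 2 * L + 1 := by
    rw [Int.card_Icc]
    omega
  have hne : (Finset.Icc (-(L : ℤ)) L).Nonempty := ⟨0, by simp⟩
  have hp0 : ∀ p ∈ s, (0 : ℝ) < p := fun p hp => hw.trans (hs p hp)
  have hfac : ∀ (p : ℕ) (k : ℤ),
      1 ≤ 1 + (if (p : ℤ) ∣ d + q * k then 2 * (L : ℝ) / p else 0) := by
    intro p k
    split_ifs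
    · have : 0 ≤ 2 * (L : ℝ) / (p : ℝ) := by positivity
      linarith
    · simp
  calc _ ≤ ∏ p ∈ s, ∏ k ∈ Finset.Icc (-(L : ℤ)) L,
          (1 + if (p : ℤ) ∣ d + q * k then 2 * (L : ℝ) / p else 0) := by
        refine Finset.prod_le_prod (fun p _ => by split_ifs <;> positivity) fun p _ => ?_
        split_ifs with h
        · obtain ⟨k, hk, hd⟩ := h
          rw [← Finset.mul_prod_erase _ _ hk, if_pos hd]
          refine le_mul_of_one_le_right (by positivity) ?_
          exact one_le_prod_real fun k _ => hfac p k
        · simpa using one_le_prod_real (s := Finset.Icc (-(L : ℤ)) L) fun k _ => hfac p k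
    _ = ∏ k ∈ Finset.Icc (-(L : ℤ)) L, divProd s (2 * L) (d + q * k) := by
        rw [Finset.prod_comm]
        rfl
    _ ≤ (∑ k ∈ Finset.Icc (-(L : ℤ)) L, divProd s (2 * L) (d + q * k) ^ (2 * L + 1)) /
          (2 * L + 1 : ℕ) := by
        have := prod_le_avg_pow _ hne (fun k => divProd s (2 * L) (d + q * k))
          fun k _ => zero_le_one.trans (one_le_divProd s (by positivity) _)
        rwa [hcard] at this
    _ ≤ _ := by
        gcongr with k _
        rw [divProd, divProd, ← Finset.prod_pow]
        refine Finset.prod_le_prod (fun p _ => pow_nonneg (zero_le_one.trans (hfac p k)) _)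
          fun p hp => ?_
        split_ifs
        · exact one_add_pow_le hw (hs p hp) hL
        · simp

/-- The arithmetic progression `n + q h`, `1 ≤ h ≤ L`. -/
noncomputable def progression (L q : ℕ) (n : ℤ) : Finset ℤ :=
  (Finset.Icc 1 L).image fun h : ℕ => n + (q : ℤ) * (h : ℤ)

lemma card_le_of_subset_progression {L q : ℕ} {n : ℤ} {T : Finset ℤ}
    (hT : T ⊆ progression L q n) : T.card ≤ L := by
  refine (Finset.card_le_card hT).trans (Finset.card_image_le.trans ?_)
  simp

lemma emod_eq_iff_dvd_sub {p : ℕ} {a b : ℤ} : a % (p : ℤ) = b % p ↔ (p : ℤ) ∣ a - b := by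
  rw [Int.emod_eq_emod_iff_emod_sub_eq_zero, Int.dvd_iff_emod_eq_zero]

lemma resCount_eq_card {p L q : ℕ} (hp : p.Prime) (hpq : ¬ p ∣ q) (hLp : L < p) {n : ℤ}
    {T : Finset ℤ} (hT : T ⊆ progression L q n) : resCount p T = T.card := by
  refine Finset.card_image_of_injOn fun a ha b hb hab => ?_
  obtain ⟨h, hh, rfl⟩ := Finset.mem_image.1 (hT ha)
  obtain ⟨h', hh', rfl⟩ := Finset.mem_image.1 (hT hb)
  have hd := emod_eq_iff_dvd_sub.1 hab
  rw [show n + (q : ℤ) * h - (n + (q : ℤ) * h') = q * ((h : ℤ) - h') by ring] at hd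
  rw [Finset.mem_Icc] at hh hh'
  rcases (Nat.prime_iff_prime_int.1 hp).dvd_or_dvd hd with h1 | h1
  · exact absurd (Int.natCast_dvd_natCast.1 h1) hpq
  · have : (h : ℤ) - h' = 0 := by
      refine Int.eq_zero_of_abs_lt_dvd h1 ?_
      rw [abs_lt]
      omega
    rw [sub_eq_zero.1 this]

lemma card_add_card_le_resCount {p L q : ℕ} (hp : p.Prime) (hpq : ¬ p ∣ q) (hLp : L < p)
    {n₁ n₂ : ℤ} {T₁ T₂ : Finset ℤ} (hT₁ : T₁ ⊆ progression L q n₁)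
    (hT₂ : T₂ ⊆ progression L q n₂) :
    ((T₁.card + T₂.card : ℕ) : ℝ) ≤ resCount p (T₁ ∪ T₂) +
      if ∃ k ∈ Finset.Icc (-(L : ℤ)) L, (p : ℤ) ∣ (n₁ - n₂) + q * k then (L : ℝ) else 0 := by
  have h1 := resCount_eq_card hp hpq hLp hT₁
  have h2 := resCount_eq_card hp hpq hLp hT₂
  unfold resCount at h1 h2 ⊢
  rw [Finset.image_union]
  split_ifs with h
  · have h3 : T₂.card ≤ ((T₁.image fun m => m % (p : ℤ)) ∪ T₂.image fun m => m % (p : ℤ)).card := by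
      rw [← h2]
      exact Finset.card_le_card Finset.subset_union_right
    have h4 := card_le_of_subset_progression hT₁
    have : T₁.card + T₂.card ≤
      ((T₁.image fun m => m % (p : ℤ)) ∪ T₂.image fun m => m % (p : ℤ)).card + L := by omega
    exact_mod_cast this
  · rw [Finset.card_union_of_disjoint, h1, h2, add_zero]
    refine Finset.disjoint_left.2 fun r hr1 hr2 => h ?_
    obtain ⟨a, ha, rfl⟩ := Finset.mem_image.1 hr1
    obtain ⟨b, hb, hab⟩ := Finset.mem_image.1 hr2
    obtain ⟨i, hi, rfl⟩ := Finset.mem_image.1 (hT₁ ha)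
    obtain ⟨j, hj, rfl⟩ := Finset.mem_image.1 (hT₂ hb)
    rw [Finset.mem_Icc] at hi hj
    refine ⟨(i : ℤ) - j, by rw [Finset.mem_Icc]; omega, ?_⟩
    have := emod_eq_iff_dvd_sub.1 hab.symm
    rwa [show n₁ - n₂ + (q : ℤ) * ((i : ℤ) - j) = n₁ + (q : ℤ) * i - (n₂ + (q : ℤ) * j) by ring]

lemma one_sub_inv_mem_of_prime {p : ℕ} (hp : p.Prime) :
    0 < 1 - 1 / (p : ℝ) ∧ 1 - 1 / (p : ℝ) ≤ 1 := by
  have h : (1 : ℝ) < p := by exact_mod_cast hp.one_lt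
  have h2 : 1 / (p : ℝ) < 1 := by rw [div_lt_one (by linarith)]; exact h
  have h3 : 0 ≤ 1 / (p : ℝ) := by positivity
  constructor <;> linarith

lemma sigBetween_pos (w t : ℝ) : 0 < sigBetween w t :=
  Finset.prod_pos fun _ hp => (one_sub_inv_mem_of_prime (mem_primesBetween.1 hp).1).1

lemma sigBetween_le_one (w t : ℝ) : sigBetween w t ≤ 1 :=
  Finset.prod_le_one (fun _ hp => (one_sub_inv_mem_of_prime (mem_primesBetween.1 hp).1).1.le)
    fun _ hp => (one_sub_inv_mem_of_prime (mem_primesBetween.1 hp).1).2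

/-- The normalised indicator that `b` avoids `T` modulo the primes in `(w, t]`. -/
noncomputable def sieveWeight (w t : ℝ) (T : Finset ℤ) (b : ℤ) : ℝ :=
  if ∀ m ∈ T, inSBetween w t b m then sigBetween w t ^ (-(T.card : ℤ)) else 0

lemma sieveWeight_empty (w t : ℝ) (b : ℤ) : sieveWeight w t ∅ b = 1 := by
  simp [sieveWeight]

lemma sum_sieveWeight_mul (w t : ℝ) (T₁ T₂ : Finset ℤ) :
    ∑ b ∈ Finset.range (PPBetween w t), sieveWeight w t T₁ b * sieveWeight w t T₂ b =
      PPBetween w t * ((sigBetween w t ^ (T₁.card + T₂.card))⁻¹ *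
        ∏ p ∈ primesBetween w t, (1 - (resCount p (T₁ ∪ T₂) : ℝ) / p)) := by
  have h : ∀ b : ℤ, sieveWeight w t T₁ b * sieveWeight w t T₂ b =
      (sigBetween w t ^ (T₁.card + T₂.card))⁻¹ *
        if ∀ m ∈ T₁ ∪ T₂, inSBetween w t b m then (1 : ℝ) else 0 := by
    intro b
    simp only [sieveWeight, Finset.mem_union, or_imp, forall_and]
    by_cases h1 : ∀ m ∈ T₁, inSBetween w t b m
    · by_cases h2 : ∀ m ∈ T₂, inSBetween w t b m
      · rw [if_pos h1, if_pos h2, if_pos ⟨h1, h2⟩, zpow_neg, zpow_neg, zpow_natCast, zpow_natCast,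
          pow_add, mul_inv, mul_one]
      · rw [if_neg h2, mul_zero, if_neg (fun h => h2 h.2), mul_zero]
    · rw [if_neg h1, zero_mul, if_neg (fun h => h1 h.1), mul_zero]
  simp only [h]
  rw [← Finset.mul_sum, sum_avoid_between]
  ring

lemma le_sum_sieveWeight_mul {w t : ℝ} (hw : 0 < w) {L : ℕ} (hL : 4 * (L : ℝ) ≤ w)
    {T₁ T₂ : Finset ℤ} (h₁ : T₁.card ≤ L) (h₂ : T₂.card ≤ L) :
    PPBetween w t * (1 - 8 * (L : ℝ) ^ 2 / w) ≤
      ∑ b ∈ Finset.range (PPBetween w t), sieveWeight w t T₁ b * sieveWeight w t T₂ b := by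
  rw [sum_sieveWeight_mul]
  refine mul_le_mul_of_nonneg_left ?_ (Nat.cast_nonneg _)
  have hR : ((T₁.card + T₂.card : ℕ) : ℝ) ≤ 2 * L := by
    exact_mod_cast (by omega : T₁.card + T₂.card ≤ 2 * L)
  have h := prod_one_sub_lower hw (primesBetween w t) (fun p hp => (mem_primesBetween.1 hp).2.1)
    (T₁.card + T₂.card) (by linarith) (fun p => resCount p (T₁ ∪ T₂))
    fun p _ => (resCount_le_card _ _).trans (Finset.card_union_le _ _)
  have hσ := pow_pos (sigBetween_pos w t) (T₁.card + T₂.card)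
  rw [inv_mul_eq_div, le_div_iff₀ hσ]
  refine le_trans ?_ h
  rw [mul_comm]
  refine mul_le_mul_of_nonneg_left ?_ hσ.le
  have : ((T₁.card + T₂.card : ℕ) : ℝ) ^ 2 ≤ (2 * (L : ℝ)) ^ 2 :=
    pow_le_pow_left₀ (Nat.cast_nonneg _) hR 2
  have h3 : 2 * ((T₁.card + T₂.card : ℕ) : ℝ) ^ 2 / w ≤ 8 * (L : ℝ) ^ 2 / w :=
    div_le_div_of_nonneg_right (by linarith) hw.le
  linarith

lemma sum_sieveWeight_mul_le {w t : ℝ} (hw : 0 < w) {L : ℕ} (hL : 4 * (L : ℝ) ≤ w)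
    {T₁ T₂ : Finset ℤ} (h₁ : T₁.card ≤ L) (h₂ : T₂.card ≤ L) (c : ℕ → ℝ)
    (hc0 : ∀ p ∈ primesBetween w t, 0 ≤ c p)
    (hc : ∀ p ∈ primesBetween w t,
      ((T₁.card + T₂.card : ℕ) : ℝ) ≤ resCount p (T₁ ∪ T₂) + c p) :
    ∑ b ∈ Finset.range (PPBetween w t), sieveWeight w t T₁ b * sieveWeight w t T₂ b ≤
      PPBetween w t * ∏ p ∈ primesBetween w t, (1 + 2 * c p / p) := by
  rw [sum_sieveWeight_mul]
  refine mul_le_mul_of_nonneg_left ?_ (Nat.cast_nonneg _)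
  have hR : ((T₁.card + T₂.card : ℕ) : ℝ) ≤ 2 * L := by
    exact_mod_cast (by omega : T₁.card + T₂.card ≤ 2 * L)
  have h := prod_one_sub_upper hw (primesBetween w t) (fun p hp => (mem_primesBetween.1 hp).2.1)
    (T₁.card + T₂.card) (by linarith) (fun p => resCount p (T₁ ∪ T₂))
    (fun p _ => (resCount_le_card _ _).trans (Finset.card_union_le _ _)) c hc0 hc
  have hσ := pow_pos (sigBetween_pos w t) (T₁.card + T₂.card)
  rw [inv_mul_eq_div, div_le_iff₀ hσ, mul_comm]
  exact h

lemma sum_sieveWeight_mul_le_trivial {w t : ℝ} {L : ℕ} {T₁ T₂ : Finset ℤ}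
    (h₁ : T₁.card ≤ L) (h₂ : T₂.card ≤ L) :
    ∑ b ∈ Finset.range (PPBetween w t), sieveWeight w t T₁ b * sieveWeight w t T₂ b ≤
      PPBetween w t * (sigBetween w t ^ (2 * L))⁻¹ := by
  have hσ := sigBetween_pos w t
  have h1 : ∀ (T : Finset ℤ) (b : ℤ), T.card ≤ L →
      0 ≤ sieveWeight w t T b ∧ sieveWeight w t T b ≤ (sigBetween w t ^ L)⁻¹ := by
    intro T b hT
    unfold sieveWeight
    split_ifs
    · refine ⟨by positivity, ?_⟩
      rw [zpow_neg, zpow_natCast]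
      exact inv_anti₀ (by positivity) (pow_le_pow_of_le_one hσ.le (sigBetween_le_one w t) hT)
    · exact ⟨le_rfl, by positivity⟩
  calc _ ≤ ∑ b ∈ Finset.range (PPBetween w t), (sigBetween w t ^ (2 * L))⁻¹ := by
        refine Finset.sum_le_sum fun b _ => ?_
        rw [two_mul, pow_add, mul_inv]
        exact mul_le_mul (h1 _ _ h₁).2 (h1 _ _ h₂).2 (h1 _ _ h₂).1 (by positivity)
    _ = _ := by simp

lemma sum_pair_sieveWeight_le {w t c : ℝ} (hw : 0 < w) {L q X : ℕ} (hL : 4 * (L : ℝ) ≤ w)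
    (hL2 : 6 * (L : ℝ) ^ 2 ≤ c * w) (hq : ∀ p ∈ primesBetween w t, ¬ p ∣ q)
    (I : Finset ℤ) (hI : ∀ n₁ ∈ I, ∀ n₂ ∈ I, ∀ k ∈ Finset.Icc (-(L : ℤ)) L,
      |n₁ - n₂ + q * k| ≤ X)
    (T : ℤ → Finset ℤ) (hT : ∀ n, T n ⊆ progression L q n) :
    ∑ n₁ ∈ I, ∑ n₂ ∈ I, ∑ b ∈ Finset.range (PPBetween w t),
        sieveWeight w t (T n₁) b * sieveWeight w t (T n₂) b ≤
      PPBetween w t * (I.card * (I.card + (2 * L + 1) * (sigBetween w t ^ (2 * L))⁻¹ +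
        2 * X * (Real.exp (2 * (6 * (L : ℝ) ^ 2 * Real.exp c) / w) - 1))) := by
  set B := 6 * (L : ℝ) ^ 2 * Real.exp c with hB
  have hB0 : 0 ≤ B := by positivity
  set s := primesBetween w t with hs
  set S := (sigBetween w t ^ (2 * L))⁻¹ with hS
  have hS0 : 0 ≤ S := by
    have := sigBetween_pos w t
    positivity
  set f : ℤ → ℝ := fun m => if m = 0 then S else (divProd s B m - 1) / (2 * L + 1 : ℕ) with hf
  have hf0 : ∀ m, 0 ≤ f m := by
    intro m
    simp only [hf]
    split_ifs
    · exact hS0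
    · exact div_nonneg (sub_nonneg.2 (one_le_divProd s hB0 m)) (Nat.cast_nonneg _)
  have hN : ((2 * L + 1 : ℕ) : ℝ) ≠ 0 := by positivity
  have hcard : (Finset.Icc (-(L : ℤ)) L).card = 2 * L + 1 := by
    rw [Int.card_Icc]
    omega
  have hpair : ∀ n₁ n₂ : ℤ, ∑ b ∈ Finset.range (PPBetween w t),
      sieveWeight w t (T n₁) b * sieveWeight w t (T n₂) b ≤
      PPBetween w t * (1 + ∑ k ∈ Finset.Icc (-(L : ℤ)) L, f (n₁ - n₂ + q * k)) := by
    intro n₁ n₂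
    have hc1 := card_le_of_subset_progression (hT n₁)
    have hc2 := card_le_of_subset_progression (hT n₂)
    by_cases hd : ∃ k ∈ Finset.Icc (-(L : ℤ)) L, n₁ - n₂ + q * k = 0
    · refine (sum_sieveWeight_mul_le_trivial hc1 hc2).trans ?_
      refine mul_le_mul_of_nonneg_left ?_ (Nat.cast_nonneg _)
      obtain ⟨k, hk, hk0⟩ := hd
      have h1 := Finset.single_le_sum (f := fun k => f (n₁ - n₂ + q * k)) (fun k _ => hf0 _) hk
      have h2 : f (n₁ - n₂ + q * k) = S := by simp [hf, hk0]
      simp only [h2] at h1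
      linarith
    · push Not at hd
      refine (sum_sieveWeight_mul_le hw hL hc1 hc2
        (fun p => if ∃ k ∈ Finset.Icc (-(L : ℤ)) L, (p : ℤ) ∣ (n₁ - n₂) + q * k then (L : ℝ) else 0)
        (fun p _ => by split_ifs <;> positivity) (fun p hp => ?_)).trans ?_
      · have hp' := mem_primesBetween.1 hp
        refine card_add_card_le_resCount hp'.1 (hq p hp) ?_ (hT n₁) (hT n₂)
        have : (L : ℝ) < p := by linarith [hp'.2.1, Nat.cast_nonneg (α := ℝ) L]
        exact_mod_cast this
      · refine mul_le_mul_of_nonneg_left ?_ (Nat.cast_nonneg _)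
        refine (prod_collision_le hw s (fun p hp => (mem_primesBetween.1 hp).2.1) L hL2
          (n₁ - n₂) q).trans (le_of_eq ?_)
        rw [Finset.sum_congr rfl (fun k hk => if_neg (hd k hk) :
          ∀ k ∈ Finset.Icc (-(L : ℤ)) L, f (n₁ - n₂ + q * k) =
            (divProd s B (n₁ - n₂ + q * k) - 1) / (2 * L + 1 : ℕ)), ← Finset.sum_div,
          Finset.sum_sub_distrib, Finset.sum_const, hcard, nsmul_eq_mul, mul_one]
        field_simp
        ring
  have hinner : ∀ n₂ ∈ I, ∀ k ∈ Finset.Icc (-(L : ℤ)) L, ∑ n₁ ∈ I, f (n₁ - n₂ + q * k) ≤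
      S + 2 * X * (Real.exp (2 * B / w) - 1) / (2 * L + 1 : ℕ) := by
    intro n₂ hn₂ k hk
    have himg : ∑ n₁ ∈ I, f (n₁ - n₂ + q * k) =
        ∑ m ∈ I.image (fun n₁ => n₁ - n₂ + q * k), f m := by
      rw [Finset.sum_image]
      intro a _ b _ hab
      simpa using hab
    rw [himg, ← Finset.sum_filter_add_sum_filter_not _ (fun m => m = 0)]
    refine add_le_add ?_ ?_
    · calc _ ≤ ∑ m ∈ ({0} : Finset ℤ), f m := by
            refine Finset.sum_le_sum_of_subset_of_nonneg (fun m hm => ?_) fun m _ _ => hf0 m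
            simpa using (Finset.mem_filter.1 hm).2
        _ = S := by simp [hf]
    · rw [Finset.sum_congr rfl (fun m hm => if_neg (Finset.mem_filter.1 hm).2 : ∀ m ∈ _, f m =
            (divProd s B m - 1) / (2 * L + 1 : ℕ)), ← Finset.sum_div]
      refine div_le_div_of_nonneg_right ?_ (Nat.cast_nonneg _)
      refine sum_divProd_sub_one_le hw s
        (fun p hp => ⟨(mem_primesBetween.1 hp).1, (mem_primesBetween.1 hp).2.1⟩) hB0 X _ ?_
      intro m hm
      obtain ⟨hm1, hm2⟩ := Finset.mem_filter.1 hm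
      obtain ⟨n₁, hn₁, rfl⟩ := Finset.mem_image.1 hm1
      exact ⟨hm2, hI n₁ hn₁ n₂ hn₂ k hk⟩
  calc _ ≤ ∑ n₁ ∈ I, ∑ n₂ ∈ I,
        PPBetween w t * (1 + ∑ k ∈ Finset.Icc (-(L : ℤ)) L, f (n₁ - n₂ + q * k)) :=
        Finset.sum_le_sum fun n₁ _ => Finset.sum_le_sum fun n₂ _ => hpair n₁ n₂
    _ = PPBetween w t * ∑ n₂ ∈ I, (I.card +
          ∑ k ∈ Finset.Icc (-(L : ℤ)) L, ∑ n₁ ∈ I, f (n₁ - n₂ + q * k)) := by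
        rw [Finset.sum_comm, Finset.mul_sum]
        refine Finset.sum_congr rfl fun n₂ _ => ?_
        rw [← Finset.mul_sum, Finset.sum_add_distrib, Finset.sum_const, nsmul_eq_mul, mul_one,
          Finset.sum_comm]
    _ ≤ PPBetween w t * ∑ n₂ ∈ I, (I.card + ∑ k ∈ Finset.Icc (-(L : ℤ)) L,
          (S + 2 * X * (Real.exp (2 * B / w) - 1) / (2 * L + 1 : ℕ))) := by
        refine mul_le_mul_of_nonneg_left (Finset.sum_le_sum fun n₂ hn₂ => ?_) (Nat.cast_nonneg _)
        exact add_le_add le_rfl (Finset.sum_le_sum fun k hk => hinner n₂ hn₂ k hk)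
    _ = _ := by
        rw [Finset.sum_const, Finset.sum_const, hcard, nsmul_eq_mul, nsmul_eq_mul,
          mul_add ((2 * L + 1 : ℕ) : ℝ), mul_div_cancel₀ _ hN]
        push_cast
        ring

lemma lam_eq_sieveWeight (M z : ℝ) (K : ℕ) (b : ℤ) (H : ℝ) (q : ℕ) (n : ℤ) :
    lam M z K b H q n = sieveWeight (H ^ M) z (APset M K b H q n) b := rfl

lemma APset_subset_progression (M : ℝ) (K : ℕ) (b : ℤ) (H : ℝ) (q : ℕ) (n : ℤ) :
    APset M K b H q n ⊆ progression ⌊(K : ℝ) * H⌋₊ q n := Finset.filter_subset _ _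

lemma APset_congr {M H : ℝ} (K q : ℕ) {b b' : ℤ} (h : b ≡ b' [ZMOD PP (H ^ M)]) (n : ℤ) :
    APset M K b H q n = APset M K b' H q n :=
  Finset.filter_congr fun m _ => inS_congr h m

lemma sieveWeight_congr {w t : ℝ} {b b' : ℤ} (h : b ≡ b' [ZMOD PPBetween w t]) (T : Finset ℤ) :
    sieveWeight w t T b = sieveWeight w t T b' := by
  simp only [sieveWeight, inSBetween_congr h]

lemma sum_lam_pow_eq {M z : ℝ} (K : ℕ) (H : ℝ) (hwz : H ^ M ≤ z) (q : ℕ) (I : Finset ℤ) (j : ℕ) :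
    ∑ b ∈ Finset.range (PP z), (∑ n ∈ I, lam M z K b H q n) ^ j =
      ∑ a ∈ Finset.range (PP (H ^ M)), ∑ b ∈ Finset.range (PPBetween (H ^ M) z),
        (∑ n ∈ I, sieveWeight (H ^ M) z (APset M K a H q n) b) ^ j := by
  rw [PP_eq_mul hwz]
  simp only [lam_eq_sieveWeight]
  refine sum_range_mul_of_coprime_s3 (PP_pos _) (PPBetween_pos _ _) (PP_coprime_PPBetween _ _)
    (fun a b => (∑ n ∈ I, sieveWeight (H ^ M) z (APset M K a H q n) b) ^ j) ?_ ?_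
  · intro a a' b h
    simp only [APset_congr K q h]
  · intro a b b' h
    simp only [sieveWeight_congr h]

/-- Bounds for the fibre sums over `b` pass to the average over all residues. -/
lemma avg_lam_pow_bounds {M z : ℝ} (K : ℕ) (H : ℝ) (hwz : H ^ M ≤ z) (q : ℕ) (I : Finset ℤ) (j : ℕ)
    {lo hi : ℝ}
    (hfib : ∀ a : ℕ, PPBetween (H ^ M) z * lo ≤ (∑ b ∈ Finset.range (PPBetween (H ^ M) z),
        (∑ n ∈ I, sieveWeight (H ^ M) z (APset M K a H q n) b) ^ j) ∧
      (∑ b ∈ Finset.range (PPBetween (H ^ M) z),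
        (∑ n ∈ I, sieveWeight (H ^ M) z (APset M K a H q n) b) ^ j) ≤ PPBetween (H ^ M) z * hi) :
    lo ≤ 1 / (PP z : ℝ) * ∑ b ∈ Finset.range (PP z), (∑ n ∈ I, lam M z K b H q n) ^ j ∧
      1 / (PP z : ℝ) * ∑ b ∈ Finset.range (PP z), (∑ n ∈ I, lam M z K b H q n) ^ j ≤ hi := by
  have hP : (0 : ℝ) < PP z := by exact_mod_cast PP_pos z
  rw [sum_lam_pow_eq K H hwz q I j, one_div, inv_mul_eq_div, le_div_iff₀ hP, div_le_iff₀ hP]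
  have hPz : (PP z : ℝ) = PP (H ^ M) * PPBetween (H ^ M) z := by
    exact_mod_cast PP_eq_mul hwz
  constructor
  · calc lo * PP z = ∑ a ∈ Finset.range (PP (H ^ M)), PPBetween (H ^ M) z * lo := by
          rw [hPz, Finset.sum_const, Finset.card_range, nsmul_eq_mul]
          ring
      _ ≤ _ := Finset.sum_le_sum fun a _ => (hfib a).1
  · calc _ ≤ ∑ a ∈ Finset.range (PP (H ^ M)), PPBetween (H ^ M) z * hi :=
          Finset.sum_le_sum fun a _ => (hfib a).2
      _ = hi * PP z := by
          rw [hPz, Finset.sum_const, Finset.card_range, nsmul_eq_mul]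
          ring

lemma avg_lam_bounds {M z H : ℝ} {K q : ℕ} (hw : 0 < H ^ M) (hwz : H ^ M ≤ z)
    (hL : 4 * (⌊(K : ℝ) * H⌋₊ : ℝ) ≤ H ^ M)
    (hq : ∀ p ∈ primesBetween (H ^ M) z, ¬ p ∣ q) (I : Finset ℤ) :
    I.card * (1 - 8 * (⌊(K : ℝ) * H⌋₊ : ℝ) ^ 2 / H ^ M) ≤
        1 / (PP z : ℝ) * ∑ b ∈ Finset.range (PP z), (∑ n ∈ I, lam M z K b H q n) ^ 1 ∧
      1 / (PP z : ℝ) * ∑ b ∈ Finset.range (PP z), (∑ n ∈ I, lam M z K b H q n) ^ 1 ≤ I.card := by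
  refine avg_lam_pow_bounds K H hwz q I 1 fun a => ?_
  simp only [pow_one]
  rw [Finset.sum_comm]
  have hT := fun n => APset_subset_progression M K a H q n
  have hone : ∀ n, ∑ b ∈ Finset.range (PPBetween (H ^ M) z),
      sieveWeight (H ^ M) z (APset M K a H q n) b =
      ∑ b ∈ Finset.range (PPBetween (H ^ M) z),
        sieveWeight (H ^ M) z (APset M K a H q n) b * sieveWeight (H ^ M) z ∅ b := by
    intro n
    simp only [sieveWeight_empty, mul_one]
  constructor
  · calc _ = ∑ n ∈ I, PPBetween (H ^ M) z * (1 - 8 * (⌊(K : ℝ) * H⌋₊ : ℝ) ^ 2 / H ^ M) := by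
          rw [Finset.sum_const, nsmul_eq_mul]
          ring
      _ ≤ _ := Finset.sum_le_sum fun n _ => by
          rw [hone]
          exact le_sum_sieveWeight_mul hw hL (card_le_of_subset_progression (hT n)) (by simp)
  · calc _ ≤ ∑ n ∈ I, (PPBetween (H ^ M) z : ℝ) := Finset.sum_le_sum fun n _ => by
          rw [hone]
          refine (sum_sieveWeight_mul_le hw hL (card_le_of_subset_progression (hT n)) (by simp)
            (fun _ => 0) (fun _ _ => le_rfl) fun p hp => ?_).trans (by simp)
          have hp' := mem_primesBetween.1 hp
          have hLp : ⌊(K : ℝ) * H⌋₊ < p := by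
            have : (⌊(K : ℝ) * H⌋₊ : ℝ) < p := by
              linarith [hp'.2.1, Nat.cast_nonneg (α := ℝ) ⌊(K : ℝ) * H⌋₊]
            exact_mod_cast this
          rw [Finset.union_empty, resCount_eq_card hp'.1 (hq p hp) hLp (hT n)]
          simp
      _ = _ := by
          rw [Finset.sum_const, nsmul_eq_mul]
          ring

lemma avg_lam_sq_bounds {M z H c : ℝ} {K q X : ℕ} (hw : 0 < H ^ M) (hwz : H ^ M ≤ z)
    (hL : 4 * (⌊(K : ℝ) * H⌋₊ : ℝ) ≤ H ^ M) (hL2 : 6 * (⌊(K : ℝ) * H⌋₊ : ℝ) ^ 2 ≤ c * H ^ M)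
    (hq : ∀ p ∈ primesBetween (H ^ M) z, ¬ p ∣ q) (I : Finset ℤ)
    (hI : ∀ n₁ ∈ I, ∀ n₂ ∈ I, ∀ k ∈ Finset.Icc (-(⌊(K : ℝ) * H⌋₊ : ℤ)) ⌊(K : ℝ) * H⌋₊,
      |n₁ - n₂ + q * k| ≤ X) :
    (I.card : ℝ) ^ 2 * (1 - 8 * (⌊(K : ℝ) * H⌋₊ : ℝ) ^ 2 / H ^ M) ≤
        1 / (PP z : ℝ) * ∑ b ∈ Finset.range (PP z), (∑ n ∈ I, lam M z K b H q n) ^ 2 ∧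
      1 / (PP z : ℝ) * ∑ b ∈ Finset.range (PP z), (∑ n ∈ I, lam M z K b H q n) ^ 2 ≤
        I.card * (I.card + (2 * ⌊(K : ℝ) * H⌋₊ + 1) *
          (sigBetween (H ^ M) z ^ (2 * ⌊(K : ℝ) * H⌋₊))⁻¹ +
        2 * X * (Real.exp (2 * (6 * (⌊(K : ℝ) * H⌋₊ : ℝ) ^ 2 * Real.exp c) / H ^ M) - 1)) := by
  refine avg_lam_pow_bounds K H hwz q I 2 fun a => ?_
  have hT := fun n => APset_subset_progression M K a H q n
  have hexp : ∑ b ∈ Finset.range (PPBetween (H ^ M) z),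
        (∑ n ∈ I, sieveWeight (H ^ M) z (APset M K a H q n) b) ^ 2 =
      ∑ n₁ ∈ I, ∑ n₂ ∈ I, ∑ b ∈ Finset.range (PPBetween (H ^ M) z),
        sieveWeight (H ^ M) z (APset M K a H q n₁) b *
          sieveWeight (H ^ M) z (APset M K a H q n₂) b := by
    simp only [sq, Finset.sum_mul_sum]
    rw [Finset.sum_comm]
    exact Finset.sum_congr rfl fun n₁ _ => Finset.sum_comm
  rw [hexp]
  refine ⟨?_, sum_pair_sieveWeight_le hw hL hL2 hq I hI _ hT⟩
  calc _ = ∑ n₁ ∈ I, ∑ n₂ ∈ I,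
        PPBetween (H ^ M) z * (1 - 8 * (⌊(K : ℝ) * H⌋₊ : ℝ) ^ 2 / H ^ M) := by
        rw [Finset.sum_const, Finset.sum_const, nsmul_eq_mul, nsmul_eq_mul]
        ring
    _ ≤ _ := Finset.sum_le_sum fun n₁ _ => Finset.sum_le_sum fun n₂ _ =>
        le_sum_sieveWeight_mul hw hL (card_le_of_subset_progression (hT n₁))
          (card_le_of_subset_progression (hT n₂))

lemma sum_inv_primes_dyadic_le (k : ℕ) (hk : k ≠ 0) :
    ∑ p ∈ primesBetween (2 ^ k) (2 ^ (k + 1)), 1 / (p : ℝ) ≤ 4 / k := by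
  set s := primesBetween (2 ^ k) (2 ^ (k + 1)) with hs
  have hk0 : (0 : ℝ) < k := by exact_mod_cast Nat.pos_of_ne_zero hk
  have hlog2 : 0 < Real.log 2 := Real.log_pos one_lt_two
  have hθ : (s.card : ℝ) * (k * Real.log 2) ≤ Real.log 4 * 2 ^ (k + 1) := by
    refine le_trans ?_ (Chebyshev.theta_le_log4_mul_x (x := 2 ^ (k + 1)) (by positivity))
    rw [Chebyshev.theta]
    calc (s.card : ℝ) * (k * Real.log 2) = ∑ p ∈ s, (k * Real.log 2) := by simp
      _ ≤ ∑ p ∈ s, Real.log p := by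
          refine Finset.sum_le_sum fun p hp => ?_
          rw [← Real.log_pow]
          exact Real.log_le_log (by positivity) (mem_primesBetween.1 hp).2.1.le
      _ ≤ _ := by
          refine Finset.sum_le_sum_of_subset_of_nonneg (fun p hp => ?_) fun p hp _ => ?_
          · have hp := mem_primesBetween.1 hp
            simp only [Finset.mem_filter, Finset.mem_Ioc]
            exact ⟨⟨hp.1.pos, Nat.le_floor hp.2.2⟩, hp.1⟩
          · exact Real.log_natCast_nonneg p
  have h4 : Real.log 4 = 2 * Real.log 2 := by
    rw [show (4 : ℝ) = 2 ^ 2 by norm_num, Real.log_pow]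
    norm_num
  have hcard : (s.card : ℝ) * k ≤ 4 * 2 ^ k := by
    rw [h4, pow_succ] at hθ
    have : (s.card : ℝ) * k * Real.log 2 ≤ 4 * 2 ^ k * Real.log 2 := by linarith
    exact le_of_mul_le_mul_right this hlog2
  calc ∑ p ∈ s, 1 / (p : ℝ) ≤ ∑ p ∈ s, 1 / (2 : ℝ) ^ k := by
        refine Finset.sum_le_sum fun p hp => ?_
        exact one_div_le_one_div_of_le (by positivity) (mem_primesBetween.1 hp).2.1.le
    _ = s.card / 2 ^ k := by
        rw [Finset.sum_const, nsmul_eq_mul]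
        ring
    _ ≤ 4 / k := by
        rw [div_le_div_iff₀ (by positivity) hk0]
        exact hcard

lemma sum_inv_primesUpTo_two_pow_le (k : ℕ) :
    ∑ p ∈ primesUpTo (2 ^ (k + 1)), 1 / (p : ℝ) ≤ 1 + 4 * (harmonic k : ℝ) := by
  induction k with
  | zero =>
    have hsub : primesUpTo (2 ^ (0 + 1)) ⊆ {2} := by
      intro p hp
      obtain ⟨h1, h2⟩ := mem_primesUpTo.1 hp
      have : p ≤ 2 := by
        have : (p : ℝ) ≤ 2 := by simpa using h2
        exact_mod_cast this
      simpa using le_antisymm this h1.two_le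
    refine (Finset.sum_le_sum_of_subset_of_nonneg hsub fun _ _ _ => by positivity).trans ?_
    norm_num
  | succ k ih =>
    have hsub : primesUpTo (2 ^ (k + 1 + 1)) ⊆
        primesUpTo (2 ^ (k + 1)) ∪ primesBetween (2 ^ (k + 1)) (2 ^ (k + 1 + 1)) := by
      intro p hp
      obtain ⟨h1, h2⟩ := mem_primesUpTo.1 hp
      rw [Finset.mem_union, mem_primesUpTo, mem_primesBetween]
      rcases le_or_gt (p : ℝ) (2 ^ (k + 1)) with h | h
      · exact Or.inl ⟨h1, h⟩
      · exact Or.inr ⟨h1, h, h2⟩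
    have h1 := sum_inv_primes_dyadic_le (k + 1) (Nat.succ_ne_zero k)
    calc _ ≤ ∑ p ∈ primesUpTo (2 ^ (k + 1)) ∪ primesBetween (2 ^ (k + 1)) (2 ^ (k + 1 + 1)),
            1 / (p : ℝ) :=
          Finset.sum_le_sum_of_subset_of_nonneg hsub fun _ _ _ => by positivity
      _ ≤ ∑ p ∈ primesUpTo (2 ^ (k + 1)), 1 / (p : ℝ) +
            ∑ p ∈ primesBetween (2 ^ (k + 1)) (2 ^ (k + 1 + 1)), 1 / (p : ℝ) := by
          rw [← Finset.sum_union_inter]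
          exact le_add_of_nonneg_right (Finset.sum_nonneg fun _ _ => by positivity)
      _ ≤ 1 + 4 * (harmonic k : ℝ) + 4 / ((k + 1 : ℕ) : ℝ) := add_le_add ih h1
      _ = _ := by
          rw [harmonic_succ]
          push_cast
          ring

lemma sum_inv_primesBetween_le (w : ℝ) {t : ℝ} (ht : 2 ≤ t) :
    ∑ p ∈ primesBetween w t, 1 / (p : ℝ) ≤ 5 + 4 * Real.log (2 * Real.log t) := by
  set k := Nat.log 2 ⌊t⌋₊ with hk
  have hfl : 2 ≤ ⌊t⌋₊ := Nat.le_floor (by exact_mod_cast ht)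
  have hk1 : 1 ≤ k := Nat.log_pos one_lt_two hfl
  have htk : t ≤ 2 ^ (k + 1) := by
    have h1 : ⌊t⌋₊ + 1 ≤ 2 ^ (k + 1) := Nat.lt_pow_succ_log_self one_lt_two _
    have h2 : ((⌊t⌋₊ + 1 : ℕ) : ℝ) ≤ 2 ^ (k + 1) := by exact_mod_cast h1
    refine (Nat.lt_floor_add_one t).le.trans ?_
    exact_mod_cast h2
  have hkt : (2 : ℝ) ^ k ≤ t := by
    have h1 : 2 ^ k ≤ ⌊t⌋₊ := Nat.pow_log_le_self 2 (by omega)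
    refine le_trans ?_ (Nat.floor_le (by linarith))
    exact_mod_cast h1
  have hk2 : (k : ℝ) ≤ 2 * Real.log t := by
    have h1 := Real.log_le_log (by positivity) hkt
    rw [Real.log_pow] at h1
    have h2 : (1 / 2 : ℝ) ≤ Real.log 2 := by linarith [Real.log_two_gt_d9]
    nlinarith [Nat.cast_nonneg (α := ℝ) k]
  have hk0 : (0 : ℝ) < k := by exact_mod_cast hk1
  calc ∑ p ∈ primesBetween w t, 1 / (p : ℝ) ≤ ∑ p ∈ primesUpTo (2 ^ (k + 1)), 1 / (p : ℝ) := by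
        refine Finset.sum_le_sum_of_subset_of_nonneg (fun p hp => ?_) fun _ _ _ => by positivity
        have hp := mem_primesBetween.1 hp
        exact mem_primesUpTo.2 ⟨hp.1, hp.2.2.trans htk⟩
    _ ≤ 1 + 4 * (harmonic k : ℝ) := sum_inv_primesUpTo_two_pow_le k
    _ ≤ 1 + 4 * (1 + Real.log k) := by
        gcongr
        exact harmonic_le_one_add_log k
    _ ≤ _ := by
        have := Real.log_le_log hk0 hk2
        linarith

lemma inv_sigBetween_pow_le (w : ℝ) {t : ℝ} (ht : 2 ≤ t) (n : ℕ) :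
    (sigBetween w t ^ n)⁻¹ ≤ Real.exp (2 * n * (5 + 4 * Real.log (2 * Real.log t))) := by
  have h1 : Real.exp (-(2 * (5 + 4 * Real.log (2 * Real.log t)))) ≤ sigBetween w t := by
    calc _ ≤ Real.exp (∑ p ∈ primesBetween w t, -(2 * (1 / (p : ℝ)))) := by
          refine Real.exp_le_exp.2 ?_
          rw [Finset.sum_neg_distrib, ← Finset.mul_sum]
          linarith [sum_inv_primesBetween_le w ht]
      _ = ∏ p ∈ primesBetween w t, Real.exp (-(2 * (1 / (p : ℝ)))) := Real.exp_sum _ _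
      _ ≤ sigBetween w t := by
          refine Finset.prod_le_prod (fun _ _ => (Real.exp_pos _).le) fun p hp => ?_
          have hp2 : (2 : ℝ) ≤ p := by exact_mod_cast (mem_primesBetween.1 hp).1.two_le
          have h2 : 1 / (p : ℝ) ≤ 1 / 2 := one_div_le_one_div_of_le two_pos hp2
          have h0 : 0 ≤ 1 / (p : ℝ) := by positivity
          refine le_trans (Real.exp_le_exp.2 ?_) (exp_neg_le_one_sub h0 h2)
          nlinarith
  refine inv_le_of_inv_le₀ (Real.exp_pos _) ?_
  rw [← Real.exp_neg]
  refine le_trans (le_of_eq ?_) (pow_le_pow_left₀ (Real.exp_pos _).le h1 n)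
  rw [← Real.exp_nat_mul]
  congr 1
  ring

lemma eventually_size_conditions {δ : ℝ} (M : ℝ) (K : ℕ) (hδ : 0 < δ) :
    ∀ᶠ x : ℝ in Filter.atTop,
      0 < x ∧ 0 < Real.log x ∧ 2 * (K : ℝ) ≤ Real.log x ^ δ ∧ 1 ≤ Real.log (Real.log x) ∧
      Real.log (Real.log x) ^ 2 ≤ Real.log x ^ (1 / 2 : ℝ) ∧ 2 * Real.log x ≤ x ∧
      Real.log x ^ (M / 2) * Real.log x ^ (1 / 2 : ℝ) ≤ x ∧
      3 * K * Real.log x ^ (M / 2) * Real.exp (60 * K * Real.log x ^ (1 / 2 : ℝ)) ≤ x := by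
  have hlog := Real.tendsto_log_atTop
  have h1 : ∀ᶠ x : ℝ in Filter.atTop, 2 * (K : ℝ) ≤ Real.log x ^ δ :=
    ((tendsto_rpow_atTop hδ).comp hlog).eventually_ge_atTop _
  have h2 : ∀ᶠ x : ℝ in Filter.atTop, 1 ≤ Real.log (Real.log x) :=
    (hlog.comp hlog).eventually_ge_atTop _
  have h3 : ∀ᶠ x : ℝ in Filter.atTop,
      Real.log (Real.log x) ^ 2 ≤ Real.log x ^ (1 / 2 : ℝ) := by
    have h := hlog.eventually
      ((isLittleO_log_rpow_rpow_atTop (2 : ℝ) (one_half_pos (α := ℝ))).bound one_pos)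
    filter_upwards [h, h2, hlog.eventually_ge_atTop 0] with x hx hx2 hx0
    rw [one_mul, Real.norm_of_nonneg (Real.rpow_nonneg (by linarith) _),
      Real.norm_of_nonneg (Real.rpow_nonneg hx0 _)] at hx
    exact_mod_cast hx
  have h4 : ∀ᶠ x : ℝ in Filter.atTop, 2 * Real.log x ≤ x := by
    filter_upwards [Real.isLittleO_log_id_atTop.bound (one_half_pos (α := ℝ)),
      Filter.eventually_ge_atTop (0 : ℝ), hlog.eventually_ge_atTop 0] with x hx hx0 hl
    simp only [id, Real.norm_of_nonneg hx0, Real.norm_of_nonneg hl] at hx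
    linarith
  have h5 : ∀ᶠ x : ℝ in Filter.atTop,
      Real.log x ^ (M / 2) * Real.log x ^ (1 / 2 : ℝ) ≤ x := by
    filter_upwards [(isLittleO_log_rpow_rpow_atTop (M / 2 + 1 / 2) one_pos).bound one_pos,
      Filter.eventually_ge_atTop (0 : ℝ), hlog.eventually_gt_atTop 0] with x hx hx0 hl
    rw [one_mul, Real.rpow_one, Real.norm_of_nonneg hx0,
      Real.norm_of_nonneg (Real.rpow_nonneg hl.le _), Real.rpow_add hl] at hx
    exact hx
  have h6 : ∀ᶠ x : ℝ in Filter.atTop,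
      3 * K * Real.log x ^ (M / 2) * Real.exp (60 * K * Real.log x ^ (1 / 2 : ℝ)) ≤ x := by
    have ho : (fun l : ℝ => 3 * (K : ℝ) + M / 2 * Real.log l + 60 * K * l ^ (1 / 2 : ℝ))
        =o[Filter.atTop] (fun l : ℝ => l) := by
      refine ((?_ : _ =o[Filter.atTop] _).add ?_).add ?_
      · exact Asymptotics.isLittleO_const_id_atTop _
      · exact Real.isLittleO_log_id_atTop.const_mul_left _
      · refine Asymptotics.IsLittleO.const_mul_left ?_ _
        refine (Asymptotics.isLittleO_of_tendsto' ?_ ?_)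
        · filter_upwards [Filter.eventually_gt_atTop (0 : ℝ)] with l hl h
          exact absurd h hl.ne'
        · refine (tendsto_rpow_neg_atTop (one_half_pos (α := ℝ))).congr' ?_
          filter_upwards [Filter.eventually_gt_atTop (0 : ℝ)] with l hl
          nth_rewrite 3 [← Real.rpow_one l]
          rw [← Real.rpow_sub hl]
          norm_num
    filter_upwards [hlog.eventually (ho.bound one_pos), Filter.eventually_gt_atTop (0 : ℝ),
      hlog.eventually_gt_atTop 0] with x hx hx0 hl
    rw [one_mul, Real.norm_of_nonneg hl.le] at hx
    have hx' := (le_abs_self _).trans hx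
    have h3K : 3 * (K : ℝ) ≤ Real.exp (3 * K) := by
      linarith [Real.add_one_le_exp (3 * (K : ℝ))]
    calc _ ≤ Real.exp (3 * K) * Real.log x ^ (M / 2) *
          Real.exp (60 * K * Real.log x ^ (1 / 2 : ℝ)) := by gcongr
      _ = Real.exp (3 * (K : ℝ) + M / 2 * Real.log (Real.log x) +
          60 * K * Real.log x ^ (1 / 2 : ℝ)) := by
          rw [Real.exp_add, Real.exp_add, Real.rpow_def_of_pos hl, mul_comm (Real.log _) (M / 2)]
      _ ≤ Real.exp (Real.log x) := Real.exp_le_exp.2 hx'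
      _ = x := Real.exp_log hx0
  filter_upwards [Filter.eventually_gt_atTop (0 : ℝ), hlog.eventually_gt_atTop 0, h1, h2, h3, h4, h5, h6]
    with x hx hl hx1 hx2 hx3 hx4 hx5 hx6
  exact ⟨hx, hl, hx1, hx2, hx3, hx4, hx5, hx6⟩

lemma prime_not_dvd_of_lt {w z : ℝ} {q : ℕ} (hq : q.Prime) (hzq : z < q) :
    ∀ p ∈ primesBetween w z, ¬ p ∣ q := by
  intro p hp hpq
  have hp := mem_primesBetween.1 hp
  rw [(Nat.prime_dvd_prime_iff_eq hp.1 hq).1 hpq] at hp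
  linarith [hp.2.2]

/-- The second-moment and first-moment estimates for a single modulus `q`. -/
lemma abs_avg_lam_pow_sub_le {M z H : ℝ} {K q y : ℕ} (hM : 2 ≤ M) (hK : 1 ≤ K)
    (hHK : 4 * (K : ℝ) ≤ H) (hwz : H ^ M ≤ z) (hq : q.Prime) (hzq : z < q)
    (hqy : (q : ℝ) ≤ y / H)
    (hdiag : 3 * K * H ^ M * (sigBetween (H ^ M) z ^ (2 * ⌊(K : ℝ) * H⌋₊))⁻¹ ≤ y)
    {j : ℕ} (hj : j = 1 ∨ j = 2) :
    |1 / (PP z : ℝ) * ∑ b ∈ Finset.range (PP z),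
        (∑ n ∈ Finset.Ioc (-((K * y : ℕ) : ℤ)) (y : ℤ), lam M z K b H q n) ^ j -
      (((K : ℝ) + 1) * y) ^ j| ≤
    (8 * (K : ℝ) ^ 2 + 1 + 48 * K ^ 2 * Real.exp (6 * K ^ 2) *
      Real.exp (12 * K ^ 2 * Real.exp (6 * K ^ 2))) * (((K : ℝ) + 1) * y) ^ j / H ^ (M - 2) := by
  have hK1 : (1 : ℝ) ≤ K := by exact_mod_cast hK
  have hH4 : 4 ≤ H := by linarith
  have hH0 : 0 < H := by linarith
  have hw : 0 < H ^ M := Real.rpow_pos_of_pos hH0 M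
  have hV : 0 < H ^ (M - 2) := Real.rpow_pos_of_pos hH0 _
  have hV1 : 1 ≤ H ^ (M - 2) := Real.one_le_rpow (by linarith) (by linarith)
  have hwV : H ^ M = H ^ (M - 2) * H ^ 2 := by
    rw [← Real.rpow_natCast H 2, ← Real.rpow_add hH0]
    norm_num
  have hHw : H ^ 2 ≤ H ^ M := by
    rw [hwV]
    exact le_mul_of_one_le_left (by positivity) hV1
  set L := ⌊(K : ℝ) * H⌋₊ with hLdef
  have hLH : (L : ℝ) ≤ K * H := Nat.floor_le (by positivity)
  have hL0 : (0 : ℝ) ≤ L := Nat.cast_nonneg L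
  have hLsq : (L : ℝ) ^ 2 ≤ K ^ 2 * H ^ 2 := by
    rw [← mul_pow]
    exact pow_le_pow_left₀ hL0 hLH 2
  have hLw : (L : ℝ) ^ 2 / H ^ M ≤ K ^ 2 / H ^ (M - 2) := by
    rw [div_le_div_iff₀ hw hV, hwV]
    nlinarith
  have hL : 4 * (L : ℝ) ≤ H ^ M := by nlinarith
  have hL2 : 6 * (L : ℝ) ^ 2 ≤ 6 * (K : ℝ) ^ 2 * H ^ M := by
    have := mul_le_mul_of_nonneg_left hHw (sq_nonneg (K : ℝ))
    linarith
  have hqp := prime_not_dvd_of_lt (w := H ^ M) hq hzq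
  set I := Finset.Ioc (-((K * y : ℕ) : ℤ)) (y : ℤ) with hI
  set N := ((K : ℝ) + 1) * y with hN
  have hcard : (I.card : ℝ) = N := by
    have : I.card = (K + 1) * y := by
      rw [hI, Int.card_Ioc]
      have : (y : ℤ) - -((K * y : ℕ) : ℤ) = (((K + 1) * y : ℕ) : ℤ) := by
        push_cast
        ring
      rw [this, Int.toNat_natCast]
    rw [this]
    push_cast
    ring
  have hN0 : 0 ≤ N := by positivity
  set E := 48 * (K : ℝ) ^ 2 * Real.exp (6 * K ^ 2) *
      Real.exp (12 * K ^ 2 * Real.exp (6 * K ^ 2)) with hE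
  have hE0 : 0 ≤ E := by positivity
  have hlow : ∀ i : ℕ, N ^ i - (8 * (K : ℝ) ^ 2 + 1 + E) * N ^ i / H ^ (M - 2) ≤
      N ^ i * (1 - 8 * (L : ℝ) ^ 2 / H ^ M) := by
    intro i
    have h1 : 8 * (L : ℝ) ^ 2 / H ^ M ≤ (8 * (K : ℝ) ^ 2 + 1 + E) / H ^ (M - 2) := by
      calc 8 * (L : ℝ) ^ 2 / H ^ M = 8 * ((L : ℝ) ^ 2 / H ^ M) := by ring
        _ ≤ 8 * ((K : ℝ) ^ 2 / H ^ (M - 2)) := by linarith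
        _ = 8 * (K : ℝ) ^ 2 / H ^ (M - 2) := by ring
        _ ≤ _ := div_le_div_of_nonneg_right (by linarith) hV.le
    have h2 := mul_le_mul_of_nonneg_left h1 (pow_nonneg hN0 i)
    have h3 : N ^ i * ((8 * (K : ℝ) ^ 2 + 1 + E) / H ^ (M - 2)) =
      (8 * (K : ℝ) ^ 2 + 1 + E) * N ^ i / H ^ (M - 2) := by ring
    linarith
  rw [abs_sub_le_iff]
  rcases hj with rfl | rfl
  · obtain ⟨h1, h2⟩ := avg_lam_bounds (K := K) hw hwz hL hqp I
    rw [hcard] at h1 h2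
    have h3 := hlow 1
    have h4 : 0 ≤ (8 * (K : ℝ) ^ 2 + 1 + E) * N ^ 1 / H ^ (M - 2) := by positivity
    rw [pow_one N] at *
    constructor <;> linarith
  · have hX : ∀ n₁ ∈ I, ∀ n₂ ∈ I, ∀ k ∈ Finset.Icc (-(L : ℤ)) L,
        |n₁ - n₂ + q * k| ≤ (((2 * K + 1) * y : ℕ) : ℤ) := by
      intro n₁ h₁ n₂ h₂ k hk
      have hqL : ((q * L : ℕ) : ℤ) ≤ ((K * y : ℕ) : ℤ) := by
        have : (q : ℝ) * L ≤ K * y := by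
          calc (q : ℝ) * L ≤ y / H * (K * H) := by gcongr
            _ = K * y := by field_simp
        exact_mod_cast this
      have hqk : |(q : ℤ) * k| ≤ ((K * y : ℕ) : ℤ) := by
        rw [abs_mul, Nat.abs_cast]
        refine le_trans ?_ hqL
        push_cast
        refine mul_le_mul_of_nonneg_left ?_ (Int.natCast_nonneg q)
        exact abs_le.2 (Finset.mem_Icc.1 hk)
      rw [hI, Finset.mem_Ioc] at h₁ h₂
      have hX' : (((2 * K + 1) * y : ℕ) : ℤ) = ((K * y : ℕ) : ℤ) + ((K * y : ℕ) : ℤ) + y := by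
        push_cast
        ring
      rw [hX', abs_le]
      rw [abs_le] at hqk
      constructor <;> linarith [h₁.1, h₁.2, h₂.1, h₂.2, hqk.1, hqk.2]
    obtain ⟨h1, h2⟩ := avg_lam_sq_bounds (K := K) hw hwz hL hL2 hqp I hX
    rw [hcard] at h1 h2
    have h3 := hlow 2
    refine ⟨?_, by linarith⟩
    set S := (sigBetween (H ^ M) z ^ (2 * L))⁻¹ with hS
    have hS0 : 0 ≤ S := by
      have := sigBetween_pos (H ^ M) z
      positivity
    have hdiag' : (2 * (L : ℝ) + 1) * S ≤ N / H ^ (M - 2) := by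
      rw [le_div_iff₀ hV]
      calc (2 * (L : ℝ) + 1) * S * H ^ (M - 2) ≤ (3 * K * H ^ 2) * S * H ^ (M - 2) := by
            have hKH : 1 ≤ (K : ℝ) * H := one_le_mul_of_one_le_of_one_le hK1 (by linarith)
            have hKH2 : (K : ℝ) * H ≤ K * H * H := le_mul_of_one_le_right (by positivity) (by linarith)
            have h5 : 2 * (L : ℝ) + 1 ≤ 3 * K * H ^ 2 := by
              rw [sq]
              linarith
            gcongr
        _ = 3 * K * H ^ M * S := by
            rw [hwV]
            ring
        _ ≤ y := hdiag
        _ ≤ N := by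
            rw [hN]
            exact le_mul_of_one_le_left (Nat.cast_nonneg y) (by linarith)
    have hexp : Real.exp (2 * (6 * (L : ℝ) ^ 2 * Real.exp (6 * K ^ 2)) / H ^ M) - 1 ≤
        12 * K ^ 2 * Real.exp (6 * K ^ 2) * Real.exp (12 * K ^ 2 * Real.exp (6 * K ^ 2)) /
          H ^ (M - 2) := by
      have ht : 2 * (6 * (L : ℝ) ^ 2 * Real.exp (6 * K ^ 2)) / H ^ M ≤
          12 * K ^ 2 * Real.exp (6 * K ^ 2) / H ^ (M - 2) := by
        calc _ = 12 * Real.exp (6 * K ^ 2) * ((L : ℝ) ^ 2 / H ^ M) := by ring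
          _ ≤ 12 * Real.exp (6 * K ^ 2) * (K ^ 2 / H ^ (M - 2)) := by gcongr
          _ = _ := by ring
      have ht' : 12 * (K : ℝ) ^ 2 * Real.exp (6 * K ^ 2) / H ^ (M - 2) ≤
          12 * K ^ 2 * Real.exp (6 * K ^ 2) := div_le_self (by positivity) hV1
      have h4 := exp_le_one_add_mul_exp (by positivity) (ht.trans ht')
      have h5 := mul_le_mul_of_nonneg_right ht
        (Real.exp_pos (12 * (K : ℝ) ^ 2 * Real.exp (6 * K ^ 2))).le
      have h6 : 12 * (K : ℝ) ^ 2 * Real.exp (6 * K ^ 2) / H ^ (M - 2) *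
          Real.exp (12 * K ^ 2 * Real.exp (6 * K ^ 2)) =
          12 * K ^ 2 * Real.exp (6 * K ^ 2) * Real.exp (12 * K ^ 2 * Real.exp (6 * K ^ 2)) /
          H ^ (M - 2) := by ring
      linarith
    have hoff : 2 * (((2 * K + 1) * y : ℕ) : ℝ) *
        (Real.exp (2 * (6 * (L : ℝ) ^ 2 * Real.exp (6 * K ^ 2)) / H ^ M) - 1) ≤
        E * N / H ^ (M - 2) := by
      have hXN : 2 * (((2 * K + 1) * y : ℕ) : ℝ) ≤ 4 * N := by
        have h5 : 2 * (((2 * K + 1) * y : ℕ) : ℝ) = 4 * N - 2 * y := by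
          rw [hN]
          push_cast
          ring
        linarith [Nat.cast_nonneg (α := ℝ) y]
      calc _ ≤ 4 * N * (12 * K ^ 2 * Real.exp (6 * K ^ 2) *
            Real.exp (12 * K ^ 2 * Real.exp (6 * K ^ 2)) / H ^ (M - 2)) := by
            refine mul_le_mul hXN hexp ?_ (by positivity)
            rw [sub_nonneg]
            exact Real.one_le_exp (by positivity)
        _ = _ := by
            rw [hE]
            ring
    have h7 : N * (N + (2 * (L : ℝ) + 1) * S + 2 * (((2 * K + 1) * y : ℕ) : ℝ) *
        (Real.exp (2 * (6 * (L : ℝ) ^ 2 * Real.exp (6 * K ^ 2)) / H ^ M) - 1)) ≤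
        N * (N + N / H ^ (M - 2) + E * N / H ^ (M - 2)) :=
      mul_le_mul_of_nonneg_left (by linarith) hN0
    have h8 : N * (N + N / H ^ (M - 2) + E * N / H ^ (M - 2)) =
        N ^ 2 + (1 + E) * N ^ 2 / H ^ (M - 2) := by ring
    have h9 : (1 + E) * N ^ 2 / H ^ (M - 2) ≤
        (8 * (K : ℝ) ^ 2 + 1 + E) * N ^ 2 / H ^ (M - 2) := by
      gcongr
      linarith [sq_nonneg (K : ℝ)]
    linarith

lemma yy_pos_bounds {δ x : ℝ} (hx : 0 < x) (hl : 1 ≤ Real.log x) (hδ0 : 0 < δ) (hδ1 : δ < 1 / 2) :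
    x * Real.log x ^ δ ≤ yy δ x ∧ x ≤ yy δ x ∧ (yy δ x : ℝ) ≤ x * (2 * Real.log x) := by
  have h0 : 1 ≤ Real.log x ^ δ := Real.one_le_rpow hl hδ0.le
  have h1 : x * Real.log x ^ δ ≤ yy δ x := Nat.le_ceil _
  refine ⟨h1, (le_mul_of_one_le_right hx.le h0).trans h1, ?_⟩
  have h2 : (yy δ x : ℝ) < x * Real.log x ^ δ + 1 := Nat.ceil_lt_add_one (by positivity)
  have h3 : Real.log x ^ δ ≤ Real.log x := by
    simpa using Real.rpow_le_rpow_of_exponent_le hl (by linarith : δ ≤ 1)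
  have h4 : 1 ≤ x := by
    have := Real.log_le_sub_one_of_pos hx
    linarith
  nlinarith [mul_le_mul_of_nonneg_left h3 hx.le, mul_le_mul_of_nonneg_left hl hx.le]

/-- The sizes of `H`, `z` and `y` needed for the moment estimates, for `H` in the admissible range. -/
lemma size_bounds_of_mem {δ M ξ x H : ℝ} {K : ℕ} (hδ0 : 0 < δ) (hδ1 : δ < 1 / 2) (hξ : 1 < ξ)
    (hM : 2 ≤ M) (hK : 1 ≤ K)
    (hx0 : 0 < x) (hl0 : 0 < Real.log x) (hK2 : 2 * (K : ℝ) ≤ Real.log x ^ δ) (hu : 1 ≤ Real.log (Real.log x))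
    (hu2 : Real.log (Real.log x) ^ 2 ≤ Real.log x ^ (1 / 2 : ℝ)) (hlx : 2 * Real.log x ≤ x)
    (hMx : Real.log x ^ (M / 2) * Real.log x ^ (1 / 2 : ℝ) ≤ x)
    (hexp : 3 * K * Real.log x ^ (M / 2) * Real.exp (60 * K * Real.log x ^ (1 / 2 : ℝ)) ≤ x)
    (hH : 2 * (yy δ x : ℝ) / x ≤ H) (hH' : H ≤ (yy δ x : ℝ) / (ξ * zz δ x)) :
    0 < zz δ x ∧ 4 * (K : ℝ) ≤ H ∧ H ^ M ≤ zz δ x ∧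
      3 * K * H ^ M * (sigBetween (H ^ M) (zz δ x) ^ (2 * ⌊(K : ℝ) * H⌋₊))⁻¹ ≤ yy δ x := by
  set l := Real.log x with hldef
  set u := Real.log l with hudef
  have hl1 : 1 ≤ l := by
    have := Real.log_le_sub_one_of_pos hl0
    linarith
  obtain ⟨hy1, hy2, hy3⟩ := yy_pos_bounds hx0 hl1 hδ0 hδ1
  set y := (yy δ x : ℝ) with hydef
  have hy0 : 0 < y := by linarith
  have hs0 : 0 < l ^ (1 / 2 : ℝ) := Real.rpow_pos_of_pos hl0 _
  have hz : zz δ x = y * u ^ 2 / l ^ (1 / 2 : ℝ) := rfl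
  have hu1 : 1 ≤ u ^ 2 := one_le_pow₀ hu
  have hz0 : 0 < zz δ x := by
    rw [hz]
    positivity
  have hHK : 4 * (K : ℝ) ≤ H := by
    refine le_trans ?_ hH
    rw [le_div_iff₀ hx0]
    nlinarith
  have hK1 : (1 : ℝ) ≤ K := by exact_mod_cast hK
  have hH0 : 0 < H := by linarith
  have hHu : H * u ^ 2 ≤ l ^ (1 / 2 : ℝ) := by
    have h1 : H * (ξ * zz δ x) ≤ y := (le_div_iff₀ (by positivity)).1 hH'
    have h2 : H * zz δ x ≤ y := by
      refine le_trans ?_ h1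
      refine mul_le_mul_of_nonneg_left ?_ hH0.le
      exact le_mul_of_one_le_left hz0.le hξ.le
    rw [hz, ← mul_div_assoc, div_le_iff₀ hs0] at h2
    have h3 : y * (H * u ^ 2) ≤ y * l ^ (1 / 2 : ℝ) := by linarith
    exact le_of_mul_le_mul_left h3 hy0
  have hHs : H ≤ l ^ (1 / 2 : ℝ) := (le_mul_of_one_le_right hH0.le hu1).trans hHu
  have hw : H ^ M ≤ l ^ (M / 2) := by
    calc H ^ M ≤ (l ^ (1 / 2 : ℝ)) ^ M := Real.rpow_le_rpow hH0.le hHs (by linarith)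
      _ = l ^ (M / 2) := by
          rw [← Real.rpow_mul hl0.le]
          congr 1
          ring
  have hwz : H ^ M ≤ zz δ x := by
    rw [hz, le_div_iff₀ hs0]
    calc H ^ M * l ^ (1 / 2 : ℝ) ≤ l ^ (M / 2) * l ^ (1 / 2 : ℝ) := by gcongr
      _ ≤ x := hMx
      _ ≤ y := hy2
      _ ≤ y * u ^ 2 := le_mul_of_one_le_right hy0.le hu1
  refine ⟨hz0, hHK, hwz, ?_⟩
  have hz2 : 2 ≤ zz δ x := by
    refine le_trans ?_ hwz
    calc (2 : ℝ) ≤ H := by linarith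
      _ = H ^ (1 : ℝ) := (Real.rpow_one H).symm
      _ ≤ H ^ M := Real.rpow_le_rpow_of_exponent_le (by linarith) (by linarith)
  have hzx : zz δ x ≤ x ^ 2 := by
    calc zz δ x ≤ y := by
          rw [hz, div_le_iff₀ hs0]
          gcongr
      _ ≤ x * (2 * l) := hy3
      _ ≤ x ^ 2 := by
          rw [sq]
          gcongr
  have hlz : Real.log (zz δ x) ≤ 2 * l := by
    have := Real.log_le_log hz0 hzx
    rwa [Real.log_pow] at this
  have hlog : 5 + 4 * Real.log (2 * Real.log (zz δ x)) ≤ 15 * u := by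
    have h1 : 0 < Real.log (zz δ x) := Real.log_pos (by linarith)
    have h2 : Real.log (2 * Real.log (zz δ x)) ≤ Real.log (4 * l) :=
      Real.log_le_log (by positivity) (by linarith)
    rw [Real.log_mul (by norm_num) hl0.ne', show (4 : ℝ) = 2 ^ 2 by norm_num, Real.log_pow] at h2
    have h3 := Real.log_two_lt_d9
    push_cast at h2
    linarith
  have hσ := inv_sigBetween_pow_le (H ^ M) hz2 (2 * ⌊(K : ℝ) * H⌋₊)
  have hfl : (⌊(K : ℝ) * H⌋₊ : ℝ) ≤ K * H := Nat.floor_le (by positivity)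
  have hHu' : H * u ≤ l ^ (1 / 2 : ℝ) := by
    refine le_trans ?_ hHu
    rw [sq]
    exact mul_le_mul_of_nonneg_left (le_mul_of_one_le_right (by linarith) hu) hH0.le
  have hbound : 2 * ((2 * ⌊(K : ℝ) * H⌋₊ : ℕ) : ℝ) *
      (5 + 4 * Real.log (2 * Real.log (zz δ x))) ≤ 60 * K * l ^ (1 / 2 : ℝ) := by
    calc _ ≤ 2 * ((2 * ⌊(K : ℝ) * H⌋₊ : ℕ) : ℝ) * (15 * u) :=
          mul_le_mul_of_nonneg_left hlog (by positivity)
      _ ≤ 4 * (K * H) * (15 * u) := by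
          refine mul_le_mul_of_nonneg_right ?_ (by linarith)
          push_cast
          linarith
      _ = 60 * K * (H * u) := by ring
      _ ≤ _ := by gcongr
  calc _ ≤ 3 * K * l ^ (M / 2) * Real.exp (60 * K * l ^ (1 / 2 : ℝ)) := by
        have := Real.exp_le_exp.2 hbound
        have h5 := hσ.trans this
        have h6 : 0 < sigBetween (H ^ M) (zz δ x) := sigBetween_pos _ _
        gcongr
    _ ≤ x := hexp
    _ ≤ y := hy2

theorem stmt3 (δ M : ℝ) (K : ℕ) (ξ : ℝ)
    (hδ0 : 0 < δ) (hδ1 : δ < 1/2) (hK : 2 ≤ K) (hξ : 1 < ξ) (hM : 2 ≤ M) :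
    ∃ C : ℝ, 0 < C ∧ ∃ x₀ : ℝ, ∀ x ≥ x₀, ∀ H ∈ frakH1 δ ξ x, ∀ j ∈ ({1, 2} : Set ℕ),
      |EE δ x (fun b => ∑ q ∈ QH δ ξ x H,
            (∑ n ∈ Finset.Ioc (-((K * yy δ x : ℕ) : ℤ)) ((yy δ x : ℤ)),
              lam M (zz δ x) K b H q n) ^ j) -
          (((K : ℝ) + 1) * (yy δ x : ℝ)) ^ j * ((QH δ ξ x H).card : ℝ)| ≤
        C * (((K : ℝ) + 1) * (yy δ x : ℝ)) ^ j * ((QH δ ξ x H).card : ℝ) / H ^ (M - 2) := by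
  refine ⟨8 * (K : ℝ) ^ 2 + 1 + 48 * K ^ 2 * Real.exp (6 * K ^ 2) *
    Real.exp (12 * K ^ 2 * Real.exp (6 * K ^ 2)), by positivity, ?_⟩
  obtain ⟨x₀, hx₀⟩ := Filter.eventually_atTop.1 (eventually_size_conditions M K hδ0)
  refine ⟨x₀, fun x hx H hH j hj => ?_⟩
  obtain ⟨hxpos, hl0, hK2, hu, hu2, hlx, hMx, hexp⟩ := hx₀ x hx
  obtain ⟨i, -, -, hH1, hH2⟩ := hH
  obtain ⟨hz0, hHK, hwz, hdiag⟩ := size_bounds_of_mem hδ0 hδ1 hξ hM (by omega : 1 ≤ K) hxpos hl0 hK2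
    hu hu2 hlx hMx hexp hH1 hH2
  have hH0 : 0 < H := by
    have : (2 : ℝ) ≤ K := by exact_mod_cast hK
    linarith
  rw [EE, Finset.sum_comm, Finset.mul_sum]
  set N := (((K : ℝ) + 1) * (yy δ x : ℝ)) ^ j with hN
  set C := 8 * (K : ℝ) ^ 2 + 1 + 48 * K ^ 2 * Real.exp (6 * K ^ 2) *
    Real.exp (12 * K ^ 2 * Real.exp (6 * K ^ 2)) with hC
  have hcard : N * ((QH δ ξ x H).card : ℝ) = ∑ q ∈ QH δ ξ x H, N := by
    rw [Finset.sum_const, nsmul_eq_mul, mul_comm]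
  have hrhs : C * N * ((QH δ ξ x H).card : ℝ) / H ^ (M - 2) =
      ∑ q ∈ QH δ ξ x H, C * N / H ^ (M - 2) := by
    rw [Finset.sum_const, nsmul_eq_mul]
    ring
  rw [hcard, hrhs, ← Finset.sum_sub_distrib]
  refine (Finset.abs_sum_le_sum_abs _ _).trans (Finset.sum_le_sum fun q hq => ?_)
  obtain ⟨-, hqp, hq1, hq2⟩ := Finset.mem_filter.1 hq
  have hzq : zz δ x < q := by
    refine lt_of_le_of_lt ?_ hq1
    rw [le_div_iff₀ (by positivity)]
    have := (le_div_iff₀ (by positivity)).1 hH2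
    linarith
  exact abs_avg_lam_pow_sub_le hM (by omega) hHK hwz hqp hzq hq2 hdiag (by simpa using hj)
end
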